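/- arXiv:1704.01847 — 4 statements merged into one kernel-verified Lean document; each statement's English description precedes it below -/
import Mathlib

section
/- Let x ∈ W²_n, z₀ ∈ ℝ^q and θ ∈ int S, and let (x̂_i, ζ_i, ϑ_i) be a sequence with x̂_i ∈ PL(𝒫_i, ℝⁿ), ζ_i ∈ ℝ^q, ϑ_i ∈ S such that lim_{i→∞} (‖x̂_i − x‖_{W²} + |ζ_i − z₀| + |ϑ_i − θ|) = 0. Let ẑ_i ∈ PL(𝒫_i, ℝ^q) be the trapezoidally-discretized clean-state path associated with (x̂_i, ζ_i, ϑ_i), and let z ∈ W²_q be the unique solution of the initial value problem ż(t) = h(t, x(t), z(t), θ), z(0) = z₀. Then lim_{i→∞} ‖ẑ_i − z‖_∞ = 0. -/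
open MeasureTheory Filter Set

lemma aux_locate (t : ℕ → ℝ) (s : ℝ) (h0 : t 0 < s) : ∀ K : ℕ, s ≤ t K →
    ∃ k < K, s ∈ Ioc (t k) (t (k + 1)) := by
  intro K
  induction K with
  | zero => intro h; exact absurd h (not_le.mpr h0)
  | succ K ih =>
    intro h
    by_cases hs : s ≤ t K
    · obtain ⟨k, hk, hh⟩ := ih hs
      exact ⟨k, by omega, hh⟩
    · exact ⟨K, by omega, not_le.mp hs, h⟩

lemma aux_node (N : ℕ) (t : ℕ → ℝ) (hm : ∀ k < N, t k < t (k + 1)) :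
    ∀ k ≤ N, t 0 ≤ t k ∧ t k ≤ t N := by
  have h1 : ∀ k ≤ N, t 0 ≤ t k := by
    intro k
    induction k with
    | zero => intro _; exact le_rfl
    | succ k ih => intro hk; exact (ih (by omega)).trans (hm k (by omega)).le
  have h2 : ∀ j, ∀ k, k + j = N → t k ≤ t N := by
    intro j
    induction j with
    | zero => intro k hk; simp at hk; rw [hk]
    | succ j ih =>
      intro k hk
      exact (hm k (by omega)).le.trans (ih (k + 1) (by omega))
  exact fun k hk => ⟨h1 k hk, h2 (N - k) k (by omega)⟩

lemma aux_pc {E G : Type*} [NormedAddCommGroup G] (N : ℕ) (t : ℕ → ℝ)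
    (hm : ∀ k < N, t k < t (k + 1)) (d : ℝ → E)
    (hd : ∀ k < N, ∃ b : E, ∀ s ∈ Ico (t k) (t (k + 1)), d s = b) (F : E → G) :
    ∀ k ≤ N, IntegrableOn (fun s => F (d s)) (Ico (t 0) (t k)) := by
  intro k
  induction k with
  | zero => intro _; simp
  | succ k ih =>
    intro hk
    have h1 := ih (by omega)
    have h0 := (aux_node N t hm k (by omega)).1
    rw [← Ico_union_Ico_eq_Ico h0 (hm k (by omega)).le]
    refine h1.union ?_
    obtain ⟨b, hb⟩ := hd k (by omega)
    refine IntegrableOn.congr_fun (f := fun _ => F b) ?_ ?_ measurableSet_Ico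
    · exact integrableOn_const (by simp)
    · intro s hs; simp [hb s hs]

lemma aux_gronwall (N : ℕ) (t e : ℕ → ℝ) (L η : ℝ) (hL : 0 < L) (hη : 0 ≤ η)
    (ht0 : t 0 = 0) (hm : ∀ k < N, t k < t (k + 1))
    (hsmall : ∀ k < N, L * (t (k + 1) - t k) ≤ 1)
    (he : ∀ k, 0 ≤ e k)
    (hrec : ∀ k < N, e (k + 1) ≤ e k +
      (t (k + 1) - t k) * (L / 2 * (e k + e (k + 1)) + η)) :
    ∀ k ≤ N, e k ≤ Real.exp (2 * L * t k) * (e 0 + 2 * η * t k) := by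
  intro k
  induction k with
  | zero => intro _; simp [ht0]
  | succ k ih =>
    intro hk
    have h1 := ih (by omega)
    have h2 := hrec k (by omega)
    have h3 := hsmall k (by omega)
    have h4 := hm k (by omega)
    have h0 := (aux_node N t hm k (by omega)).1
    rw [ht0] at h0
    set δ := t (k + 1) - t k with hδ
    have htk : t (k + 1) = t k + δ := by rw [hδ]; ring
    have hδ0 : 0 < δ := by rw [hδ]; linarith
    obtain ⟨a, ha⟩ : ∃ a, a = L * δ / 2 := ⟨_, rfl⟩
    have ha0 : 0 ≤ a := by rw [ha]; positivity
    have ha1 : a ≤ 1 / 2 := by rw [ha]; linarith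
    have h5 : (1 - a) * e (k + 1) ≤ (1 + a) * e k + δ * η := by rw [ha]; nlinarith
    have h6 : e (k + 1) ≤ (1 + 2 * a) * ((1 + a) * e k + δ * η) := by
      have hX : 0 ≤ (1 - a) * e (k + 1) := mul_nonneg (by linarith) (he _)
      have : e (k + 1) ≤ (1 + 2 * a) * ((1 - a) * e (k + 1)) := by
        have : 0 ≤ a * (1 - 2 * a) * e (k + 1) :=
          mul_nonneg (mul_nonneg ha0 (by linarith)) (he _)
        nlinarith
      exact this.trans (mul_le_mul_of_nonneg_left h5 (by linarith))
    have hexp : (1 + 2 * a) * (1 + a) ≤ Real.exp (2 * L * δ) := by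
      have e1 := Real.add_one_le_exp (2 * a)
      have e2 := Real.add_one_le_exp a
      have e3 : Real.exp (2 * a) * Real.exp a ≤ Real.exp (2 * L * δ) := by
        rw [← Real.exp_add]; apply Real.exp_le_exp.mpr; rw [ha]
        nlinarith [mul_pos hL hδ0]
      refine le_trans ?_ e3
      apply mul_le_mul <;> first | linarith | positivity
    have h7 : e (k + 1) ≤ Real.exp (2 * L * δ) * e k + 2 * (δ * η) := by
      have A : (1 + 2 * a) * (1 + a) * e k ≤ Real.exp (2 * L * δ) * e k :=
        mul_le_mul_of_nonneg_right hexp (he k)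
      have B : (1 + 2 * a) * (δ * η) ≤ 2 * (δ * η) :=
        mul_le_mul_of_nonneg_right (by linarith) (by positivity)
      nlinarith
    have h8 : Real.exp (2 * L * δ) * e k ≤
        Real.exp (2 * L * t (k + 1)) * (e 0 + 2 * η * t k) := by
      have : Real.exp (2 * L * t (k + 1)) = Real.exp (2 * L * δ) * Real.exp (2 * L * t k) := by
        rw [← Real.exp_add, htk]; congr 1; ring
      rw [this, mul_assoc (Real.exp (2 * L * δ))]
      exact mul_le_mul_of_nonneg_left h1 (Real.exp_pos _).le
    have h9 : 2 * (δ * η) ≤ Real.exp (2 * L * t (k + 1)) * (2 * (δ * η)) := by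
      have : 1 ≤ Real.exp (2 * L * t (k + 1)) := by
        apply Real.one_le_exp; rw [htk]; positivity
      exact le_mul_of_one_le_left (by positivity) this
    calc e (k + 1) ≤ _ := h7
      _ ≤ _ := add_le_add h8 h9
      _ = _ := by rw [htk]; ring

lemma aux_int {E : Type*} [NormedAddCommGroup E] [NormedSpace ℝ E] (tf : ℝ) (htf : 0 < tf)
    (g : ℝ → E) (hg2 : IntegrableOn (fun s => ‖g s‖ ^ 2) (Ioc 0 tf))
    (hg : IntegrableOn g (Ioc 0 tf)) (η : ℝ) (hη : 0 < η)
    (hb : ∫ s in Ioc 0 tf, ‖g s‖ ^ 2 ≤ η ^ 2) (t : ℝ) (ht : t ∈ Icc 0 tf) :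
    ‖∫ s in Ioc 0 t, g s‖ ≤ η * (tf + 1) := by
  have h1 : ‖∫ s in Ioc 0 t, g s‖ ≤ ∫ s in Ioc 0 t, ‖g s‖ := norm_integral_le_integral_norm _
  have h2 : ∫ s in Ioc 0 t, ‖g s‖ ≤ ∫ s in Ioc 0 tf, ‖g s‖ :=
    setIntegral_mono_set hg.norm (Eventually.of_forall fun s => norm_nonneg _)
      (Ioc_subset_Ioc_right ht.2).eventuallyLE
  have hc : IntegrableOn (fun _ : ℝ => η) (Ioc 0 tf) := integrableOn_const (by simp)
  have h3 : ∫ s in Ioc 0 tf, ‖g s‖ ≤ ∫ s in Ioc 0 tf, (η + η⁻¹ * ‖g s‖ ^ 2) := by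
    refine integral_mono hg.norm (hc.add (hg2.const_mul _)) ?_
    intro s
    show ‖g s‖ ≤ η + η⁻¹ * ‖g s‖ ^ 2
    have : η * ‖g s‖ ≤ η * (η + η⁻¹ * ‖g s‖ ^ 2) := by
      have : η * (η + η⁻¹ * ‖g s‖ ^ 2) = η ^ 2 + ‖g s‖ ^ 2 := by field_simp
      rw [this]
      nlinarith [sq_nonneg (η - ‖g s‖), sq_nonneg (η), sq_nonneg ‖g s‖]
    exact le_of_mul_le_mul_left this hη
  have h4 : ∫ s in Ioc 0 tf, (η + η⁻¹ * ‖g s‖ ^ 2) =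
      tf * η + η⁻¹ * ∫ s in Ioc 0 tf, ‖g s‖ ^ 2 := by
    rw [integral_add hc (hg2.const_mul _), integral_const_mul]
    simp [htf.le]
  have h5 : η⁻¹ * ∫ s in Ioc 0 tf, ‖g s‖ ^ 2 ≤ η := by
    calc _ ≤ η⁻¹ * η ^ 2 := by gcongr
      _ = η := by field_simp
  linarith

lemma aux_step {E : Type*} [NormedAddCommGroup E] [NormedSpace ℝ E] [CompleteSpace E]
    (a s : ℝ) (has : a ≤ s)
    (v : E) (g : ℝ → E) (hg : IntegrableOn g (Ioc a s)) (M : ℝ)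
    (hM : ∀ u ∈ Ioc a s, ‖v - g u‖ ≤ M) :
    ‖(s - a) • v - ∫ u in Ioc a s, g u‖ ≤ (s - a) * M := by
  have h1 : (s - a) • v = ∫ u in Ioc a s, v := by simp [has]
  have hv : IntegrableOn (fun _ : ℝ => v) (Ioc a s) := integrableOn_const (by simp)
  rw [h1, ← integral_sub hv hg]
  have := norm_setIntegral_le_of_norm_le_const (μ := volume) (s := Ioc a s)
    (f := fun u => v - g u) (C := M) (by simp) hM
  simpa [has, mul_comm] using this

lemma aux_uc {E : Type*} [NormedAddCommGroup E] (tf : ℝ) (f : ℝ → E)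
    (hf : ContinuousOn f (Icc 0 tf)) (ε : ℝ) (hε : 0 < ε) :
    ∃ δ > 0, ∀ s ∈ Icc 0 tf, ∀ u ∈ Icc 0 tf, |s - u| < δ → ‖f s - f u‖ ≤ ε := by
  have := isCompact_Icc.uniformContinuousOn_of_continuous hf
  rw [Metric.uniformContinuousOn_iff] at this
  obtain ⟨δ, hδ, h⟩ := this ε hε
  refine ⟨δ, hδ, fun s hs u hu hsu => ?_⟩
  have := h s hs u hu (by rwa [Real.dist_eq])
  rw [dist_eq_norm] at this
  exact this.le

/-- convergence of trapezoidally-discretized clean-state paths: if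
`(x̂_i, ζ_i, ϑ_i) → (x, z₀, θ)` with `θ ∈ int S` and `ϑ_i ∈ S`, the associated
trapezoidally-discretized clean-state paths `ẑ_i` converge, in supremum norm, to the
unique solution `z` of `ż = h(t, x, z, θ)`, `z(0) = z₀`. Piecewise linear
`x̂_i ∈ PL(𝒫_i)` are encoded by their piecewise constant derivatives `d i`; the `W²`
function `x` by the pair `(x, x')`. -/
theorem stmt12 {n q m : ℕ} (tf : ℝ) (htf : 0 < tf)
    (N : ℕ → ℕ) (hN1 : ∀ i, 1 ≤ N i) (tP : ℕ → ℕ → ℝ)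
    (htP0 : ∀ i, tP i 0 = 0) (htPN : ∀ i, tP i (N i) = tf)
    (htPmono : ∀ i, ∀ k < N i, tP i k < tP i (k + 1))
    (hnested : ∀ i, ∀ k ≤ N i, ∃ k' ≤ N (i + 1), tP (i + 1) k' = tP i k)
    (hmesh : Tendsto (fun i => ⨆ k : Fin (N i), (tP i (k.1 + 1) - tP i k.1))
      atTop (nhds 0))
    (S : Set (EuclideanSpace ℝ (Fin m)))
    (h : ℝ → EuclideanSpace ℝ (Fin n) → EuclideanSpace ℝ (Fin q) →
      EuclideanSpace ℝ (Fin m) → EuclideanSpace ℝ (Fin q))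
    (hhc : Continuous fun p : ℝ × EuclideanSpace ℝ (Fin n) × EuclideanSpace ℝ (Fin q) ×
      EuclideanSpace ℝ (Fin m) => h p.1 p.2.1 p.2.2.1 p.2.2.2)
    (ρh : ℝ → ℝ) (hρh : Tendsto ρh (nhdsWithin 0 (Ioi 0)) (nhds 0))
    (hhu : ∀ ε > (0:ℝ), ∀ t ∈ Icc (0:ℝ) tf, ∀ t' ∈ Icc (0:ℝ) tf,
      ∀ (a a' : EuclideanSpace ℝ (Fin n)) (b b' : EuclideanSpace ℝ (Fin q))
        (c c' : EuclideanSpace ℝ (Fin m)), c ∈ S → c' ∈ S →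
      |t - t'| ≤ ε → ‖a - a'‖ ≤ ε → ‖b - b'‖ ≤ ε → ‖c - c'‖ ≤ ε →
      ‖h t a b c - h t' a' b' c'‖ ≤ ρh ε)
    (Lf Lh : ℝ) (hLf : 0 < Lf) (hLh : 0 < Lh)
    (hhLip : ∀ θ' ∈ S, ∀ t ∈ Icc (0:ℝ) tf,
      ∀ (a a' : EuclideanSpace ℝ (Fin n)) (b b' : EuclideanSpace ℝ (Fin q)),
      ‖h t a b θ' - h t a' b' θ'‖ ≤ Lh * (‖a - a'‖ + ‖b - b'‖))
    (hmeshLip : ∀ i, ∀ k < N i, (Lf + Lh) * (tP i (k + 1) - tP i k) < 2)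
    -- the limit point
    (x x' : ℝ → EuclideanSpace ℝ (Fin n))
    (hInt : IntegrableOn x' (Icc 0 tf))
    (hL2 : IntegrableOn (fun t => ‖x' t‖ ^ 2) (Icc 0 tf))
    (hAC : ∀ t ∈ Icc (0:ℝ) tf, x t = x 0 + ∫ s in Ioc (0:ℝ) t, x' s)
    (z0 : EuclideanSpace ℝ (Fin q))
    (θ : EuclideanSpace ℝ (Fin m)) (hθ : θ ∈ interior S)
    -- the approximating sequence
    (xh d : ℕ → ℝ → EuclideanSpace ℝ (Fin n))
    (hdpc : ∀ i, ∀ k < N i, ∃ b : EuclideanSpace ℝ (Fin n),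
      ∀ s ∈ Ico (tP i k) (tP i (k + 1)), d i s = b)
    (hxhAC : ∀ i, ∀ s ∈ Icc (0:ℝ) tf, xh i s = xh i 0 + ∫ u in Ioc (0:ℝ) s, d i u)
    (ζ : ℕ → EuclideanSpace ℝ (Fin q)) (ϑ : ℕ → EuclideanSpace ℝ (Fin m))
    (hϑS : ∀ i, ϑ i ∈ S)
    (hconv : Tendsto (fun i =>
      Real.sqrt (‖xh i 0 - x 0‖ ^ 2 + ∫ s in Ioc (0:ℝ) tf, ‖d i s - x' s‖ ^ 2)
      + ‖ζ i - z0‖ + ‖ϑ i - θ‖) atTop (nhds 0))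
    -- the trapezoidally-discretized clean-state paths
    (zh : ℕ → ℝ → EuclideanSpace ℝ (Fin q))
    (hzh0 : ∀ i, zh i 0 = ζ i)
    (hzhrec : ∀ i, ∀ k < N i, ∀ s ∈ Ioc (tP i k) (tP i (k + 1)),
      zh i s = zh i (tP i k) + ((s - tP i k) / 2) •
        (h (tP i k) (xh i (tP i k)) (zh i (tP i k)) (ϑ i) +
         h (tP i (k + 1)) (xh i (tP i (k + 1))) (zh i (tP i (k + 1))) (ϑ i)))
    -- the limit clean-state path: solution of the IVP
    (z : ℝ → EuclideanSpace ℝ (Fin q)) (hzc : ContinuousOn z (Icc 0 tf))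
    (hz : ∀ t ∈ Icc (0:ℝ) tf, z t = z0 + ∫ s in Ioc (0:ℝ) t, h s (x s) (z s) θ) :
    Tendsto (fun i => ⨆ t : Icc (0:ℝ) tf, ‖zh i t.1 - z t.1‖) atTop (nhds 0) := by
  have hθS : θ ∈ S := interior_subset hθ
  have hxc : ContinuousOn x (Icc 0 tf) := by
    have h1 : ContinuousOn (fun t => x 0 + ∫ s in Ioc (0:ℝ) t, x' s) (Icc 0 tf) :=
      continuousOn_const.add (intervalIntegral.continuousOn_primitive hInt)
    exact h1.congr hAC
  have hgc : ContinuousOn (fun s => h s (x s) (z s) θ) (Icc 0 tf) :=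
    hhc.comp_continuousOn
      (continuousOn_id.prodMk (hxc.prodMk (hzc.prodMk continuousOn_const)))
  have hgi : IntegrableOn (fun s => h s (x s) (z s) θ) (Icc 0 tf) :=
    hgc.integrableOn_compact isCompact_Icc
  -- increments of z
  have hzinc : ∀ a s, 0 ≤ a → a ≤ s → s ≤ tf →
      z s = z a + ∫ u in Ioc a s, h u (x u) (z u) θ := by
    intro a s ha has hs
    rw [hz s ⟨ha.trans has, hs⟩, hz a ⟨ha, has.trans hs⟩, ← Ioc_union_Ioc_eq_Ioc ha has,
      setIntegral_union (Ioc_disjoint_Ioc_of_le le_rfl) measurableSet_Ioc, add_assoc]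
    · exact hgi.mono_set fun u hu => ⟨hu.1.le, hu.2.trans (has.trans hs)⟩
    · exact hgi.mono_set fun u hu => ⟨ha.trans hu.1.le, hu.2.trans hs⟩
  -- the three parts of the convergence
  have hW : ∀ η > 0, ∀ᶠ i in atTop,
      Real.sqrt (‖xh i 0 - x 0‖ ^ 2 + ∫ s in Ioc (0:ℝ) tf, ‖d i s - x' s‖ ^ 2) ≤ η ∧
      ‖ζ i - z0‖ ≤ η ∧ ‖ϑ i - θ‖ ≤ η := by
    intro η hη
    filter_upwards [hconv.eventually (gt_mem_nhds hη)] with i hi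
    have h1 := Real.sqrt_nonneg (‖xh i 0 - x 0‖ ^ 2 + ∫ s in Ioc (0:ℝ) tf, ‖d i s - x' s‖ ^ 2)
    have h2 := norm_nonneg (ζ i - z0)
    have h3 := norm_nonneg (ϑ i - θ)
    refine ⟨?_, ?_, ?_⟩ <;> linarith
  have hM : ∀ η > 0, ∀ᶠ i in atTop, ∀ k < N i, tP i (k + 1) - tP i k < η := by
    intro η hη
    filter_upwards [hmesh.eventually (gt_mem_nhds hη)] with i hi k hk
    refine lt_of_le_of_lt ?_ hi
    exact le_ciSup (f := fun k : Fin (N i) => (tP i (k.1 + 1) - tP i k.1))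
      (Set.finite_range _).bddAbove ⟨k, hk⟩
  have hX : ∀ i η, 0 < η →
      Real.sqrt (‖xh i 0 - x 0‖ ^ 2 + ∫ s in Ioc (0:ℝ) tf, ‖d i s - x' s‖ ^ 2) ≤ η →
      ∀ t ∈ Icc (0:ℝ) tf, ‖xh i t - x t‖ ≤ η * (tf + 2) := by
    intro i η hη hi t ht
    have hdI : ∀ {G : Type} [NormedAddCommGroup G] (F : EuclideanSpace ℝ (Fin n) → G),
        IntegrableOn (fun s => F (d i s)) (Ioc 0 tf) := by
      intro G _ F
      have := aux_pc (N i) (tP i) (htPmono i) (d i) (hdpc i) F (N i) le_rfl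
      rw [htP0, htPN] at this
      rw [integrableOn_Ioc_iff_integrableOn_Ioo]
      exact this.mono_set Ioo_subset_Ico_self
    have hd1 : IntegrableOn (d i) (Ioc 0 tf) := hdI (fun v => v)
    have hd2 : IntegrableOn (fun s => ‖d i s‖ ^ 2) (Ioc 0 tf) := hdI (fun v => ‖v‖ ^ 2)
    have hx1 : IntegrableOn x' (Ioc 0 tf) := hInt.mono_set Ioc_subset_Icc_self
    have hx2 : IntegrableOn (fun t => ‖x' t‖ ^ 2) (Ioc 0 tf) := hL2.mono_set Ioc_subset_Icc_self
    have hg1 : IntegrableOn (fun s => d i s - x' s) (Ioc 0 tf) := hd1.sub hx1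
    have hg2 : IntegrableOn (fun s => ‖d i s - x' s‖ ^ 2) (Ioc 0 tf) := by
      refine Integrable.mono' ((hd2.const_mul 2).add (hx2.const_mul 2))
        (hg1.aestronglyMeasurable.norm.pow 2) (Eventually.of_forall fun s => ?_)
      have h1 := norm_sub_le (d i s) (x' s)
      have h2 := norm_nonneg (d i s - x' s)
      rw [Real.norm_of_nonneg (by positivity)]
      show ‖d i s - x' s‖ ^ 2 ≤ 2 * ‖d i s‖ ^ 2 + 2 * ‖x' s‖ ^ 2
      nlinarith [sq_nonneg (‖d i s‖ - ‖x' s‖)]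
    have hI0 : 0 ≤ ∫ s in Ioc (0:ℝ) tf, ‖d i s - x' s‖ ^ 2 :=
      integral_nonneg fun s => by positivity
    have hsq := (Real.sqrt_le_left hη.le).mp hi
    have hA : ‖xh i 0 - x 0‖ ≤ η :=
      abs_le_of_sq_le_sq' (by linarith) hη.le |>.2
    have hB := aux_int tf htf (fun s => d i s - x' s) hg2 hg1 η hη
      (by nlinarith [sq_nonneg ‖xh i 0 - x 0‖]) t ht
    have hsub : Ioc 0 t ⊆ Ioc 0 tf := Ioc_subset_Ioc_right ht.2
    have hE : xh i t - x t = (xh i 0 - x 0) + ∫ s in Ioc 0 t, (d i s - x' s) := by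
      rw [integral_sub (hd1.mono_set hsub) (hx1.mono_set hsub), hxhAC i t ht, hAC t ht]
      abel
    rw [hE]
    refine (norm_add_le _ _).trans ?_
    linarith
  obtain ⟨B, hB⟩ : ∃ B, B = Real.exp (2 * Lh * tf) * (1 + 2 * tf) := ⟨_, rfl⟩
  have hB0 : 0 < B := by rw [hB]; positivity
  have hB1 : 1 ≤ B := by
    rw [hB]
    exact one_le_mul_of_one_le_of_one_le (Real.one_le_exp (by positivity)) (by linarith)
  obtain ⟨C, hC⟩ : ∃ C, C = B + tf * (Lh * B + 1) := ⟨_, rfl⟩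
  have hC0 : 0 < C := by rw [hC]; positivity
  have key : ∀ η > 0, ∀ᶠ i in atTop, ∀ t ∈ Icc (0:ℝ) tf, ‖zh i t - z t‖ ≤ C * η := by
    intro η hη
    obtain ⟨ε, hρε, hε⟩ : ∃ ε, ρh ε < η ∧ 0 < ε :=
      ((hρh.eventually (gt_mem_nhds hη)).and self_mem_nhdsWithin).exists
    obtain ⟨δ1, hδ1, hux⟩ := aux_uc tf x hxc (ε / 2) (by positivity)
    obtain ⟨δ2, hδ2, huz⟩ := aux_uc tf z hzc ε hε
    obtain ⟨κ, hκ⟩ : ∃ κ, κ = min (ε / 2 / (tf + 2)) (min ε η) := ⟨_, rfl⟩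
    have hκ0 : 0 < κ := by rw [hκ]; positivity
    have hκ1 : κ * (tf + 2) ≤ ε / 2 := by
      rw [← le_div_iff₀ (by positivity), hκ]; exact min_le_left _ _
    have hκ2 : κ ≤ ε := by rw [hκ]; exact (min_le_right _ _).trans (min_le_left _ _)
    have hκ3 : κ ≤ η := by rw [hκ]; exact (min_le_right _ _).trans (min_le_right _ _)
    filter_upwards [hW κ hκ0, hM δ1 hδ1, hM δ2 hδ2, hM ε hε, hM (1 / Lh) (by positivity)]
      with i hi hm1 hm2 hm3 hm4
    obtain ⟨hi1, hi2, hi3⟩ := hi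
    have hXi := hX i κ hκ0 hi1
    have hnode : ∀ k ≤ N i, tP i k ∈ Icc (0:ℝ) tf := by
      intro k hk
      have := aux_node (N i) (tP i) (htPmono i) k hk
      rwa [htP0, htPN] at this
    -- pointwise comparison
    have hcmp : ∀ a ∈ Icc (0:ℝ) tf, ∀ u ∈ Icc (0:ℝ) tf, |a - u| < δ1 → |a - u| < δ2 →
        |a - u| < ε →
        ‖h a (xh i a) (zh i a) (ϑ i) - h u (x u) (z u) θ‖ ≤ Lh * ‖zh i a - z a‖ + η := by
      intro a ha u hu h1 h2 h3
      have hA := hhLip (ϑ i) (hϑS i) a ha (xh i a) (xh i a) (zh i a) (z a)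
      have hBB := hhu ε hε a ha u hu (xh i a) (x u) (z a) (z u) (ϑ i) θ (hϑS i) hθS h3.le
        (by
          have e1 := hXi a ha
          have e2 := hux a ha u hu h1
          have e3 := norm_sub_le_norm_sub_add_norm_sub (xh i a) (x a) (x u)
          linarith)
        (huz a ha u hu h2) (hi3.trans hκ2)
      have e3 := norm_sub_le_norm_sub_add_norm_sub (h a (xh i a) (zh i a) (ϑ i))
        (h a (xh i a) (z a) (ϑ i)) (h u (x u) (z u) θ)
      rw [sub_self, norm_zero, zero_add] at hA
      linarith
    have hstep : ∀ k < N i, ∀ s ∈ Ioc (tP i k) (tP i (k + 1)),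
        ‖zh i s - z s‖ ≤ ‖zh i (tP i k) - z (tP i k)‖ + (s - tP i k) *
          (Lh / 2 * (‖zh i (tP i k) - z (tP i k)‖ +
            ‖zh i (tP i (k + 1)) - z (tP i (k + 1))‖) + η) := by
      intro k hk s hs
      have hk0 := hnode k hk.le
      have hk1 := hnode (k + 1) hk
      have hd1 := hm1 k hk
      have hd2 := hm2 k hk
      have hd3 := hm3 k hk
      have hst := aux_step (tP i k) s hs.1.le
        ((1 / 2 : ℝ) • (h (tP i k) (xh i (tP i k)) (zh i (tP i k)) (ϑ i) +
         h (tP i (k + 1)) (xh i (tP i (k + 1))) (zh i (tP i (k + 1))) (ϑ i)))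
        (fun u => h u (x u) (z u) θ)
        (hgi.mono_set fun u hu => ⟨hk0.1.trans hu.1.le, hu.2.trans (hs.2.trans hk1.2)⟩)
        (Lh / 2 * (‖zh i (tP i k) - z (tP i k)‖ +
            ‖zh i (tP i (k + 1)) - z (tP i (k + 1))‖) + η) (by
          intro u hu
          have huI : u ∈ Icc (0:ℝ) tf := ⟨hk0.1.trans hu.1.le, hu.2.trans (hs.2.trans hk1.2)⟩
          have hu1 := hu.1
          have hu2 := hu.2.trans hs.2
          have ab1 : |tP i k - u| ≤ tP i (k + 1) - tP i k := by
            rw [abs_le]; constructor <;> linarith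
          have ab2 : |tP i (k + 1) - u| ≤ tP i (k + 1) - tP i k := by
            rw [abs_le]; constructor <;> linarith
          have c1 := hcmp _ hk0 u huI (ab1.trans_lt hd1) (ab1.trans_lt hd2) (ab1.trans_lt hd3)
          have c2 := hcmp _ hk1 u huI (ab2.trans_lt hd1) (ab2.trans_lt hd2) (ab2.trans_lt hd3)
          set p := h (tP i k) (xh i (tP i k)) (zh i (tP i k)) (ϑ i)
          set r := h (tP i (k + 1)) (xh i (tP i (k + 1))) (zh i (tP i (k + 1))) (ϑ i)
          set w := h u (x u) (z u) θ
          have hs1 : (1 / 2 : ℝ) • (p + r) - w = (1 / 2 : ℝ) • ((p - w) + (r - w)) := by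
            module
          rw [hs1, norm_smul, Real.norm_of_nonneg (by norm_num)]
          have := norm_add_le (p - w) (r - w)
          linarith)
      have hE : zh i s - z s = (zh i (tP i k) - z (tP i k)) +
          ((s - tP i k) • ((1 / 2 : ℝ) • (h (tP i k) (xh i (tP i k)) (zh i (tP i k)) (ϑ i) +
         h (tP i (k + 1)) (xh i (tP i (k + 1))) (zh i (tP i (k + 1))) (ϑ i))) -
          ∫ u in Ioc (tP i k) s, h u (x u) (z u) θ) := by
        rw [hzinc (tP i k) s hk0.1 hs.1.le (hs.2.trans hk1.2), hzhrec i k hk s hs]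
        module
      rw [hE]
      exact (norm_add_le _ _).trans (by linarith)
    have he0 : ‖zh i (tP i 0) - z (tP i 0)‖ ≤ η := by
      have : z 0 = z0 := by
        have := hz 0 ⟨le_rfl, htf.le⟩
        simpa using this
      rw [htP0, hzh0, this]
      exact hi2.trans hκ3
    have hgr := aux_gronwall (N i) (tP i) (fun k => ‖zh i (tP i k) - z (tP i k)‖) Lh η hLh hη.le
      (htP0 i) (htPmono i)
      (fun k hk => by
        have := (hm4 k hk).le
        rw [le_div_iff₀ hLh] at this
        linarith)
      (fun k => norm_nonneg _)
      (fun k hk => hstep k hk _ ⟨htPmono i k hk, le_rfl⟩)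
    have hgr2 : ∀ k ≤ N i, ‖zh i (tP i k) - z (tP i k)‖ ≤ B * η := by
      intro k hk
      have hk0 := hnode k hk
      refine (hgr k hk).trans ?_
      rw [hB, mul_assoc (Real.exp (2 * Lh * tf))]
      have h1 : Real.exp (2 * Lh * tP i k) ≤ Real.exp (2 * Lh * tf) :=
        Real.exp_le_exp.mpr (mul_le_mul_of_nonneg_left hk0.2 (by positivity))
      have h2 : ‖zh i (tP i 0) - z (tP i 0)‖ + 2 * η * tP i k ≤ (1 + 2 * tf) * η := by
        have := mul_le_mul_of_nonneg_left hk0.2 (by positivity : 0 ≤ 2 * η)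
        linarith
      have h3 : 0 ≤ ‖zh i (tP i 0) - z (tP i 0)‖ + 2 * η * tP i k :=
        add_nonneg (norm_nonneg _) (mul_nonneg (by positivity) hk0.1)
      exact mul_le_mul h1 h2 h3 (Real.exp_pos _).le
    intro t ht
    rcases eq_or_lt_of_le ht.1 with h0 | h0
    · have := hgr2 0 (Nat.zero_le _)
      rw [htP0] at this
      rw [← h0]
      refine this.trans (mul_le_mul_of_nonneg_right ?_ hη.le)
      rw [hC]
      have : 0 ≤ tf * (Lh * B + 1) := by positivity
      linarith
    · obtain ⟨k, hk, hs⟩ := aux_locate (tP i) t (by rwa [htP0]) (N i) (by rw [htPN]; exact ht.2)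
      have h1 := hstep k hk t hs
      have h2 := hgr2 k hk.le
      have h3 := hgr2 (k + 1) hk
      have hk0 := hnode k hk.le
      have h4 : (t - tP i k) * (Lh / 2 * (‖zh i (tP i k) - z (tP i k)‖ +
            ‖zh i (tP i (k + 1)) - z (tP i (k + 1))‖) + η) ≤ tf * (Lh * (B * η) + η) := by
        apply mul_le_mul
        · linarith [ht.2, hk0.1]
        · have := mul_le_mul_of_nonneg_left (add_le_add h2 h3) (by positivity : 0 ≤ Lh / 2)
          linarith
        · positivity
        · exact htf.le
      rw [hC]
      linarith
  rw [Metric.tendsto_atTop']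
  intro η hη
  have := key (η / 2 / C) (by positivity)
  rw [eventually_atTop] at this
  obtain ⟨I, hI⟩ := this
  refine ⟨I, fun i hi => ?_⟩
  have h1 : (⨆ t : Icc (0:ℝ) tf, ‖zh i t.1 - z t.1‖) ≤ η / 2 := by
    refine Real.iSup_le (fun t => ?_) (by positivity)
    have := hI i hi.le t.1 t.2
    rwa [mul_div_cancel₀ _ hC0.ne'] at this
  have h2 : 0 ≤ (⨆ t : Icc (0:ℝ) tf, ‖zh i t.1 - z t.1‖) :=
    Real.iSup_nonneg fun t => norm_nonneg _
  rw [Real.dist_eq, sub_zero, abs_of_nonneg h2]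
  linarith
end

section
/- Let (x̂_i, ζ_i, ϑ_i) be a sequence with x̂_i ∈ PL(𝒫_i, ℝⁿ), ζ_i ∈ ℝ^q and ϑ_i ∈ S such that lim_{i→∞} (‖x̂_i − x‖_{W²} + |ζ_i − z₀| + |ϑ_i − θ|) = 0 for some x ∈ W²_n, z₀ ∈ ℝ^q and θ ∈ S. Then lim_{i→∞} ℓ̂_i(x̂_i, ζ_i, ϑ_i) = ℓ(x, z₀, θ) in ℝ̄. -/
open MeasureTheory Filter Set

/-- `ln` with values in `ℝ̄ = EReal` and `ln 0 := −∞`. -/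
noncomputable def elog (r : ℝ) : EReal := if r ≤ 0 then ⊥ else ((Real.log r : ℝ) : EReal)

theorem elog_eq (r : ℝ) : elog r = ENNReal.log (ENNReal.ofReal r) := by
  unfold elog ENNReal.log
  by_cases hr : r ≤ 0
  · simp [hr]
  · have : 0 ≤ r := by linarith
    simp [hr, ENNReal.toReal_ofReal this]

theorem continuous_elog : Continuous elog := by
  have : elog = fun r => ENNReal.log (ENNReal.ofReal r) := funext elog_eq
  rw [this]
  exact ENNReal.continuous_log.comp ENNReal.continuous_ofReal

theorem elog_ne_top (r : ℝ) : elog r ≠ ⊤ := by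
  unfold elog; split_ifs <;> simp

theorem elog_pos {r : ℝ} (hr : 0 < r) : elog r = ((Real.log r : ℝ) : EReal) := by
  unfold elog; rw [if_neg (not_le.mpr hr)]

theorem diff_det {n : ℕ} : Differentiable ℝ (fun B : EuclideanSpace ℝ (Fin n) →L[ℝ] EuclideanSpace ℝ (Fin n) =>
    LinearMap.det (ContinuousLinearMap.toLinearMap B)) := by
  let b := (EuclideanSpace.basisFun (Fin n) ℝ).toBasis
  have : (fun B : EuclideanSpace ℝ (Fin n) →L[ℝ] EuclideanSpace ℝ (Fin n) =>
    LinearMap.det (ContinuousLinearMap.toLinearMap B)) = fun B => ∑ σ : Equiv.Perm (Fin n), 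
      ((Equiv.Perm.sign σ : ℤ) : ℝ) * ∏ j, (LinearMap.toMatrix b b (ContinuousLinearMap.toLinearMap B)) (σ j) j := by
    funext B
    rw [← LinearMap.det_toMatrix b, Matrix.det_apply']
  rw [this]
  have he : ∀ p j, Differentiable ℝ (fun B : EuclideanSpace ℝ (Fin n) →L[ℝ] EuclideanSpace ℝ (Fin n) => (LinearMap.toMatrix b b (ContinuousLinearMap.toLinearMap B)) p j) := by
    intro p j
    let l : (EuclideanSpace ℝ (Fin n) →L[ℝ] EuclideanSpace ℝ (Fin n)) →ₗ[ℝ] ℝ :=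
      { toFun := fun B => (LinearMap.toMatrix b b (ContinuousLinearMap.toLinearMap B)) p j
        map_add' := by intro x y; simp
        map_smul' := by intro c x; simp }
    exact (LinearMap.toContinuousLinearMap l).differentiable
  fun_prop

noncomputable def trL (n : ℕ) : (EuclideanSpace ℝ (Fin n) →L[ℝ] EuclideanSpace ℝ (Fin n)) →L[ℝ] ℝ :=
  LinearMap.toContinuousLinearMap 
   { toFun := fun B => LinearMap.trace ℝ (EuclideanSpace ℝ (Fin n)) (ContinuousLinearMap.toLinearMap B)
     map_add' := by intro x y; simp
     map_smul' := by intro c x; simp }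

theorem trL_apply {n : ℕ} (B : EuclideanSpace ℝ (Fin n) →L[ℝ] EuclideanSpace ℝ (Fin n)) :
  trL n B = LinearMap.trace ℝ (EuclideanSpace ℝ (Fin n)) (ContinuousLinearMap.toLinearMap B) := rfl

theorem hasFDerivAt_det {n : ℕ} : HasFDerivAt (fun B : EuclideanSpace ℝ (Fin n) →L[ℝ] EuclideanSpace ℝ (Fin n) =>
    LinearMap.det (ContinuousLinearMap.toLinearMap B)) (trL n) 1 := by
  have h1 := (diff_det (n := n) 1).hasFDerivAt
  convert h1 using 1
  ext B
  have h2 : HasDerivAt (fun r : ℝ => (1 : EuclideanSpace ℝ (Fin n) →L[ℝ] EuclideanSpace ℝ (Fin n)) + r • B) B 0 := by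
    simpa using ((hasDerivAt_id (0:ℝ)).smul_const B).const_add (1 : EuclideanSpace ℝ (Fin n) →L[ℝ] EuclideanSpace ℝ (Fin n))
  have h3 := HasFDerivAt.comp_hasDerivAt_of_eq (x := (0:ℝ)) h1 h2 (by ext v; simp)
  refine HasDerivAt.unique ?_ h3
  let b := (EuclideanSpace.basisFun (Fin n) ℝ).toBasis
  set M := LinearMap.toMatrix b b (ContinuousLinearMap.toLinearMap B) with hM
  have e : ((fun B : EuclideanSpace ℝ (Fin n) →L[ℝ] EuclideanSpace ℝ (Fin n) =>
    LinearMap.det (ContinuousLinearMap.toLinearMap B)) ∘ fun r : ℝ => 1 + r • B) = 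
     fun r => 1 + M.trace * r + (Matrix.det (1 + (Polynomial.X : Polynomial ℝ) • M.map Polynomial.C)).divX.divX.eval r * r ^ 2 := by
    funext r
    rw [← Matrix.det_one_add_smul]
    simp only [Function.comp]
    rw [← LinearMap.det_toMatrix b]
    congr 1
    rw [ContinuousLinearMap.toLinearMap_add, ContinuousLinearMap.toLinearMap_smul, map_add, map_smul]
    congr 1
    exact LinearMap.toMatrix_one b
  rw [e]
  set P := (Matrix.det (1 + (Polynomial.X : Polynomial ℝ) • M.map Polynomial.C)).divX.divX
  have h4 : HasDerivAt (fun r : ℝ => 1 + M.trace * r + P.eval r * r ^ 2) (M.trace * 1 + (P.derivative.eval 0 * 0^2 + P.eval 0 * (2 * 0))) 0 := by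
    refine HasDerivAt.add (((hasDerivAt_id (0:ℝ)).const_mul _).const_add _) ?_
    refine HasDerivAt.mul (P.hasDerivAt 0) ?_
    simpa using hasDerivAt_pow 2 (0:ℝ)
  have h5 : trL n B = (M.trace * 1 + (P.derivative.eval 0 * 0^2 + P.eval 0 * (2 * 0))) := by
    rw [trL_apply, LinearMap.trace_eq_matrix_trace ℝ b]
    simp [hM]
  rw [h5]
  exact h4

theorem logdet_bound {n : ℕ} (ε : ℝ) (hε : 0 < ε) : ∃ r > 0, ∀ B : EuclideanSpace ℝ (Fin n) →L[ℝ] EuclideanSpace ℝ (Fin n),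
    ‖B‖ ≤ r → 0 < LinearMap.det (ContinuousLinearMap.toLinearMap (1 + B)) ∧ 
    |Real.log (LinearMap.det (ContinuousLinearMap.toLinearMap (1 + B))) - trL n B| ≤ ε * ‖B‖ := by
  have hd := hasFDerivAt_det (n := n)
  have h1 : LinearMap.det (ContinuousLinearMap.toLinearMap (1 : EuclideanSpace ℝ (Fin n) →L[ℝ] EuclideanSpace ℝ (Fin n))) = 1 :=
    LinearMap.det_id
  have hl := hd.log (by rw [h1]; norm_num)
  rw [h1] at hl
  rw [hasFDerivAt_iff_isLittleO_nhds_zero, Asymptotics.isLittleO_iff] at hl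
  have hp : ∀ᶠ B : EuclideanSpace ℝ (Fin n) →L[ℝ] EuclideanSpace ℝ (Fin n) in nhds 0, 
      0 < LinearMap.det (ContinuousLinearMap.toLinearMap (1 + B)) := by
    have hc : Continuous (fun B : EuclideanSpace ℝ (Fin n) →L[ℝ] EuclideanSpace ℝ (Fin n) => LinearMap.det (ContinuousLinearMap.toLinearMap (1 + B))) :=
      (diff_det (n := n)).continuous.comp (continuous_const.add continuous_id)
    have := hc.tendsto 0
    refine this.eventually_const_lt ?_
    rw [add_zero, h1]; norm_num
  obtain ⟨r, hr, H⟩ := Metric.eventually_nhds_iff_ball.1 ((hl hε).and hp)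
  refine ⟨r/2, by positivity, fun B hB => ?_⟩
  have := H B (by rw [mem_ball_zero_iff]; linarith)
  refine ⟨this.2, ?_⟩
  have h3 := this.1
  rw [h1] at h3
  simpa using h3

theorem riemann_bound (N : ℕ) (t : ℕ → ℝ) (ht : ∀ k < N, t k < t (k+1)) (c : ℕ → ℝ) (g w : ℝ → ℝ)
    (h0N : t 0 ≤ t N)
    (hg : IntegrableOn g (Ioc (t 0) (t N))) (hw : IntegrableOn w (Ioc (t 0) (t N)))
    (hmem : ∀ k ≤ N, t k ∈ Icc (t 0) (t N))
    (H : ∀ k < N, ∀ s ∈ Ioo (t k) (t (k+1)), |c k - g s| ≤ w s) :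
    |∑ k ∈ Finset.range N, (t (k+1) - t k) * c k - ∫ s in Ioc (t 0) (t N), g s| ≤ ∫ s in Ioc (t 0) (t N), w s := by
  have hsub : ∀ k < N, Ioc (t k) (t (k+1)) ⊆ Ioc (t 0) (t N) := fun k hk =>
    Ioc_subset_Ioc (hmem k hk.le).1 (hmem (k+1) hk).2
  have hgi : ∀ k < N, IntervalIntegrable g volume (t k) (t (k+1)) := fun k hk =>
    (intervalIntegrable_iff_integrableOn_Ioc_of_le (ht k hk).le).2 (hg.mono_set (hsub k hk))
  have hwi : ∀ k < N, IntervalIntegrable w volume (t k) (t (k+1)) := fun k hk =>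
    (intervalIntegrable_iff_integrableOn_Ioc_of_le (ht k hk).le).2 (hw.mono_set (hsub k hk))
  rw [← intervalIntegral.integral_of_le h0N, ← intervalIntegral.integral_of_le h0N,
    ← intervalIntegral.sum_integral_adjacent_intervals hgi, 
    ← intervalIntegral.sum_integral_adjacent_intervals hwi, ← Finset.sum_sub_distrib]
  refine (Finset.abs_sum_le_sum_abs _ _).trans (Finset.sum_le_sum fun k hk => ?_)
  have hk := Finset.mem_range.1 hk
  have e : (t (k+1) - t k) * c k = ∫ s in (t k)..(t (k+1)), c k := by simp
  rw [e, ← intervalIntegral.integral_sub (by simp) (hgi k hk)]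
  refine (intervalIntegral.abs_integral_le_integral_abs (ht k hk).le).trans ?_
  refine intervalIntegral.integral_mono_on_of_le_Ioo (ht k hk).le ?_ (hwi k hk) (H k hk)
  exact (IntervalIntegrable.sub (by simp) (hgi k hk)).abs

theorem compact_unif {P Y : Type*} [PseudoMetricSpace P] [PseudoMetricSpace Y] (F : P → Y) (hF : Continuous F)
    (K : Set P) (hK : IsCompact K) (ε : ℝ) (hε : 0 < ε) : ∃ δ > 0, ∀ p ∈ K, ∀ r, dist p r ≤ δ → dist (F p) (F r) ≤ ε := by
  have := hK.uniformContinuousAt_of_continuousAt F (fun a _ => hF.continuousAt) (Metric.dist_mem_uniformity hε)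
  obtain ⟨δ, hδ, H⟩ := Metric.mem_uniformity_dist.1 this
  refine ⟨δ/2, by positivity, fun p hp r hr => ?_⟩
  exact le_of_lt (H (show dist p r < δ by linarith) hp)

theorem disc_gron (N : ℕ) (t : ℕ → ℝ) (e : ℕ → ℝ) (L η : ℝ) (hL : 0 < L) (hη : 0 ≤ η)
    (ht : ∀ k < N, t k < t (k+1)) (hs : ∀ k < N, (t (k+1) - t k) * L ≤ 1) (he : ∀ k, 0 ≤ e k)
    (h0 : t 0 = 0)
    (H : ∀ k < N, e (k+1) ≤ e k + (t (k+1) - t k) * (L/2 * (e k + e (k+1)) + η)) :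
    ∀ k ≤ N, 0 ≤ t k ∧ e k ≤ Real.exp (2 * L * t k) * (e 0 + 2 * t k * η) := by
  intro k
  induction k with
  | zero => intro _; simp [h0]
  | succ k ih =>
    intro hk
    obtain ⟨i0, i1⟩ := ih (by omega)
    have a1 := ht k (by omega)
    have a2 := hs k (by omega)
    have a3 := H k (by omega)
    set δ := t (k+1) - t k with hδ
    have hδ0 : 0 < δ := by linarith
    refine ⟨by linarith, ?_⟩
    have e1 := he k
    have e2 := he (k+1)
    set u := δ * L / 2 with hu
    have hu0 : 0 < u := by positivity
    have hu1 : u ≤ 1/2 := by rw [hu]; linarith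
    have b1 : e (k+1) * (1 - u) ≤ e k * (1+u) + δ * η := by
      rw [hu]; linarith
    have b2 : e (k+1) ≤ (1 + 4 * u) * e k + 2 * (δ * η) := by
      have : 0 ≤ δ * η := by positivity
      have h5 : (e k * (1+u) + δ * η) ≤ ((1 + 4 * u) * e k + 2 * (δ * η)) * (1-u) := by
        nlinarith [mul_nonneg hu0.le e1, mul_nonneg hu0.le (mul_nonneg (sub_nonneg.2 hu1) e1), mul_nonneg (sub_nonneg.2 hu1) this]
      have h6 : 0 < 1 - u := by linarith
      exact le_of_mul_le_mul_right (b1.trans h5) h6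
    have b3 : 1 + 4 * u ≤ Real.exp (2 * L * δ) := by
      have := Real.add_one_le_exp (2 * L * δ)
      rw [hu]; linarith
    have c1 : Real.exp (2 * L * t (k+1)) = Real.exp (2 * L * δ) * Real.exp (2 * L * t k) := by
      rw [← Real.exp_add]; congr 1; rw [hδ]; ring
    have c2 : 1 ≤ Real.exp (2 * L * t (k+1)) := by
      apply Real.one_le_exp; have : 0 ≤ t (k+1) := by linarith
      positivity
    calc e (k+1) ≤ (1 + 4 * u) * e k + 2 * (δ * η) := b2
      _ ≤ Real.exp (2 * L * δ) * (Real.exp (2 * L * t k) * (e 0 + 2 * t k * η)) + Real.exp (2 * L * t (k+1)) * (2 * (δ * η)) := by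
        have hh : 0 ≤ 2 * (δ * η) := by positivity
        exact add_le_add (mul_le_mul b3 i1 e1 (Real.exp_pos _).le) (le_mul_of_one_le_left hh c2)
      _ = _ := by rw [c1, hδ]; ring

theorem part_mem (N : ℕ) (t : ℕ → ℝ) (ht : ∀ k < N, t k < t (k+1)) : ∀ k ≤ N, t k ∈ Icc (t 0) (t N) := by
  have key : ∀ a b, a ≤ b → b ≤ N → t a ≤ t b := by
    intro a b hab
    induction b, hab using Nat.le_induction with
    | base => intro _; exact le_rfl
    | succ b hb ih => intro hbN; exact (ih (by omega)).trans (ht b (by omega)).le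
  exact fun k hk => ⟨key 0 k (by omega) hk, key k N hk le_rfl⟩

theorem part_loc (N : ℕ) (t : ℕ → ℝ) : ∀ s ∈ Ioc (t 0) (t N), ∃ k < N, s ∈ Ioc (t k) (t (k+1)) := by
  induction N with
  | zero => intro s hs; exact absurd (hs.1.trans_le hs.2) (lt_irrefl _)
  | succ N ih =>
    intro s hs
    by_cases h : s ≤ t N
    · obtain ⟨k, hk, hk'⟩ := ih s ⟨hs.1, h⟩
      exact ⟨k, by omega, hk'⟩
    · exact ⟨N, by omega, not_le.1 h, hs.2⟩

theorem pl_cont {Z : Type*} [NormedAddCommGroup Z] [NormedSpace ℝ Z] (N : ℕ) (t : ℕ → ℝ) (ht : ∀ k < N, t k < t (k+1)) 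
    (y : ℝ → Z) (v : ℕ → Z)
    (H : ∀ k < N, ∀ s ∈ Ioc (t k) (t (k+1)), y s = y (t k) + ((s - t k)/2) • v k) :
    ContinuousOn y (Icc (t 0) (t N)) := by
  induction N with
  | zero => simp
  | succ N ih =>
    have i1 := ih (fun k hk => ht k (by omega)) (fun k hk => H k (by omega))
    have h0 : t 0 ≤ t N := (part_mem (N+1) t ht N (by omega)).1
    have h1 := ht N (by omega)
    rw [← Icc_union_Icc_eq_Icc h0 h1.le]
    refine i1.union_of_isClosed ?_ isClosed_Icc isClosed_Icc
    have : ContinuousOn (fun s => y (t N) + ((s - t N)/2) • v N) (Icc (t N) (t (N+1))) := by fun_prop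
    refine this.congr fun s hs => ?_
    rcases hs.1.eq_or_lt with h | h
    · rw [← h]; simp
    · exact H N (by omega) s ⟨h, hs.2⟩

theorem ereal_coe_sum (s : Finset ℕ) (g : ℕ → ℝ) :
    ((∑ k ∈ s, g k : ℝ) : EReal) = ∑ k ∈ s, (g k : EReal) := by
  classical
  induction s using Finset.induction_on with
  | empty => simp
  | insert a s ha ih => rw [Finset.sum_insert ha, Finset.sum_insert ha, EReal.coe_add, ih]


theorem step_int {E : Type*} [NormedAddCommGroup E] [NormedSpace ℝ E] (N : ℕ) (t : ℕ → ℝ) (ht : ∀ k < N, t k < t (k+1))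
    (d x' : ℝ → E) (hd : ∀ k < N, ∃ b : E, ∀ s ∈ Ico (t k) (t (k + 1)), d s = b)
    (h0N : t 0 ≤ t N)
    (hx' : IntegrableOn x' (Ioc (t 0) (t N))) (hL2 : IntegrableOn (fun s => ‖x' s‖^2) (Ioc (t 0) (t N))) :
    IntegrableOn d (Ioc (t 0) (t N)) ∧ IntegrableOn (fun s => ‖d s - x' s‖^2) (Ioc (t 0) (t N)) := by
  have hmem := part_mem N t ht
  have hsub : ∀ k < N, Ioc (t k) (t (k+1)) ⊆ Ioc (t 0) (t N) := fun k hk =>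
    Ioc_subset_Ioc (hmem k hk.le).1 (hmem (k+1) hk).2
  constructor
  · rw [← intervalIntegrable_iff_integrableOn_Ioc_of_le h0N]
    refine IntervalIntegrable.trans_iterate fun k hk => ?_
    obtain ⟨b, hb⟩ := hd k hk
    refine IntervalIntegrable.congr_uIoo (f := fun _ => b) (by simp) ?_
    rw [uIoo_of_le (ht k hk).le]
    intro s hs
    exact (hb s ⟨hs.1.le, hs.2⟩).symm
  · rw [← intervalIntegrable_iff_integrableOn_Ioc_of_le h0N]
    refine IntervalIntegrable.trans_iterate fun k hk => ?_
    obtain ⟨b, hb⟩ := hd k hk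
    refine IntervalIntegrable.congr_uIoo (f := fun s => ‖b - x' s‖^2) ?_ ?_
    · rw [intervalIntegrable_iff_integrableOn_Ioc_of_le (ht k hk).le]
      have h1 := hx'.mono_set (hsub k hk)
      have h2 := hL2.mono_set (hsub k hk)
      have h3 : IntegrableOn (fun s => 2 * ‖b‖^2 + 2 * ‖x' s‖^2) (Ioc (t k) (t (k+1))) := 
        Integrable.add (integrable_const _) (h2.const_mul 2)
      refine Integrable.mono h3 ?_ ?_
      · exact ((aestronglyMeasurable_const.sub h1.aestronglyMeasurable).norm.pow 2)
      · refine Eventually.of_forall fun s => ?_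
        rw [Real.norm_of_nonneg (by positivity), Real.norm_of_nonneg (by positivity)]
        have := norm_sub_le b (x' s)
        nlinarith [norm_nonneg (b - x' s), sq_nonneg (‖b‖ - ‖x' s‖), norm_nonneg b, norm_nonneg (x' s)]
    · rw [uIoo_of_le (ht k hk).le]
      intro s hs
      simp [hb s ⟨hs.1.le, hs.2⟩]

theorem sup_bound {E : Type*} [NormedAddCommGroup E] [NormedSpace ℝ E] (tf : ℝ) (htf : 0 < tf)
    (y d x x' : ℝ → E) (hd : IntegrableOn d (Ioc 0 tf)) (hx' : IntegrableOn x' (Ioc 0 tf))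
    (h2 : IntegrableOn (fun s => ‖d s - x' s‖^2) (Ioc 0 tf))
    (hy : ∀ t ∈ Icc (0:ℝ) tf, y t = y 0 + ∫ s in Ioc (0:ℝ) t, d s)
    (hx : ∀ t ∈ Icc (0:ℝ) tf, x t = x 0 + ∫ s in Ioc (0:ℝ) t, x' s) (η : ℝ) (hη : 0 < η) :
    ∀ t ∈ Icc (0:ℝ) tf, ‖y t - x t‖ ≤ ‖y 0 - x 0‖ + (η⁻¹ * (∫ s in Ioc 0 tf, ‖d s - x' s‖^2) + η * tf) := by
  intro t ht
  have hs : Ioc 0 t ⊆ Ioc 0 tf := Ioc_subset_Ioc_right ht.2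
  rw [hy t ht, hx t ht, add_sub_add_comm, ← integral_sub (hd.mono_set hs) (hx'.mono_set hs)]
  refine (norm_add_le _ _).trans (add_le_add le_rfl ?_)
  refine (norm_integral_le_integral_norm _).trans ?_
  have hi : IntegrableOn (fun s => ‖d s - x' s‖) (Ioc 0 tf) := (hd.sub hx').norm
  refine (setIntegral_mono_set hi (Eventually.of_forall fun s => norm_nonneg _) hs.eventuallyLE).trans ?_
  have hc : IntegrableOn (fun s : ℝ => η) (Ioc 0 tf) := integrable_const _
  have e : η⁻¹ * (∫ s in Ioc 0 tf, ‖d s - x' s‖^2) + η * tf = ∫ s in Ioc 0 tf, (η⁻¹ * ‖d s - x' s‖^2 + η) := by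
    rw [integral_add (h2.const_mul _) hc, integral_const_mul]
    simp [htf.le, mul_comm]
  rw [e]
  refine integral_mono hi ((h2.const_mul _).add hc) fun s => ?_
  simp only
  set a := ‖d s - x' s‖
  have : η⁻¹ * a^2 + η - a = η⁻¹ * ((a - η/2)^2 + 3/4*η^2) := by field_simp; ring
  have h3 : 0 ≤ η⁻¹ * ((a - η/2)^2 + 3/4*η^2) := by positivity
  linarith

theorem curve_unif {E Z Θ Y : Type*} [NormedAddCommGroup E] [NormedAddCommGroup Z] [NormedAddCommGroup Θ] [NormedAddCommGroup Y]
    (tf : ℝ) (x : ℝ → E) (z : ℝ → Z) (θ : Θ) (hx : ContinuousOn x (Icc 0 tf)) (hz : ContinuousOn z (Icc 0 tf))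
    (F : ℝ × E × Z × Θ → Y) (hF : Continuous F) (ε : ℝ) (hε : 0 < ε) :
    ∃ δ > 0, ∀ s ∈ Icc 0 tf, ∀ t ∈ Icc 0 tf, ∀ a b c, |t - s| ≤ δ → ‖a - x t‖ ≤ δ → ‖b - z t‖ ≤ δ →
      ‖c - θ‖ ≤ δ → ‖F (t, a, b, c) - F (s, x s, z s, θ)‖ ≤ ε := by
  have hK : IsCompact ((fun s => (s, x s, z s, θ)) '' Icc 0 tf) := 
    isCompact_Icc.image_of_continuousOn (by fun_prop)
  obtain ⟨δ1, hδ1, H1⟩ := compact_unif F hF _ hK ε hε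
  have ux := isCompact_Icc.uniformContinuousOn_of_continuous hx
  have uz := isCompact_Icc.uniformContinuousOn_of_continuous hz
  rw [Metric.uniformContinuousOn_iff_le] at ux uz
  obtain ⟨δ2, hδ2, H2⟩ := ux (δ1/2) (by positivity)
  obtain ⟨δ3, hδ3, H3⟩ := uz (δ1/2) (by positivity)
  refine ⟨min (δ1/2) (min δ2 δ3), by positivity, ?_⟩
  intro s hs t ht a b c h1 h2 h3 h4
  simp only [le_min_iff] at h1 h2 h3 h4
  rw [norm_sub_rev, ← dist_eq_norm]
  refine H1 _ (mem_image_of_mem _ hs) _ ?_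
  have g2 := H2 t ht s hs (by rw [Real.dist_eq]; exact h1.2.1)
  have g3 := H3 t ht s hs (by rw [Real.dist_eq]; exact h1.2.2)
  have q2 : dist (x s) a ≤ δ1 := by
    have := dist_triangle (x s) (x t) a
    have w1 : dist (x s) (x t) ≤ δ1/2 := by rw [dist_comm]; exact g2
    have w2 : dist (x t) a ≤ δ1/2 := by rw [dist_comm, dist_eq_norm]; exact h2.1
    linarith
  have q3 : dist (z s) b ≤ δ1 := by
    have := dist_triangle (z s) (z t) b
    have w1 : dist (z s) (z t) ≤ δ1/2 := by rw [dist_comm]; exact g3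
    have w2 : dist (z t) b ≤ δ1/2 := by rw [dist_comm, dist_eq_norm]; exact h3.1
    linarith
  have q1 : dist s t ≤ δ1 := by rw [dist_comm, Real.dist_eq]; linarith [h1.1]
  have q4 : dist θ c ≤ δ1 := by rw [dist_comm, dist_eq_norm]; linarith [h4.1]
  simp only [Prod.dist_eq]
  exact max_le q1 (max_le q2 (max_le q3 q4))

theorem z_err {Z : Type*} [NormedAddCommGroup Z] [NormedSpace ℝ Z] [CompleteSpace Z] (tf : ℝ) (htf : 0 < tf) (N : ℕ) (t : ℕ → ℝ) (ht : ∀ k < N, t k < t (k+1))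
    (h0 : t 0 = 0) (hN : t N = tf) (y z g : ℝ → Z) (a : ℕ → Z) (L η : ℝ) (hL : 0 < L) (hη : 0 ≤ η)
    (hs : ∀ k < N, (t (k+1) - t k) * L ≤ 1) (z0 : Z)
    (hg : IntegrableOn g (Ioc 0 tf)) (hz : ∀ s ∈ Icc (0:ℝ) tf, z s = z0 + ∫ r in Ioc (0:ℝ) s, g r)
    (hy : ∀ k < N, ∀ s ∈ Ioc (t k) (t (k+1)), y s = y (t k) + ((s - t k)/2) • (a k + a (k+1)))
    (ha : ∀ k < N, ∀ s ∈ Icc (t k) (t (k+1)), ‖a k - g s‖ ≤ L * ‖y (t k) - z (t k)‖ + η)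
    (ha' : ∀ k < N, ∀ s ∈ Icc (t k) (t (k+1)), ‖a (k+1) - g s‖ ≤ L * ‖y (t (k+1)) - z (t (k+1))‖ + η) :
    ∀ s ∈ Icc 0 tf, ‖y s - z s‖ ≤ 2 * (Real.exp (2 * L * tf) * (‖y 0 - z0‖ + 2 * tf * η)) + tf * η := by
  have hmem : ∀ k ≤ N, t k ∈ Icc 0 tf := by
    have := part_mem N t ht
    rwa [h0, hN] at this
  set e : ℕ → ℝ := fun k => ‖y (t k) - z (t k)‖ with he
  have step : ∀ k < N, ∀ s ∈ Ioc (t k) (t (k+1)), ‖y s - z s‖ ≤ e k + (s - t k) * (L/2 * (e k + e (k+1)) + η) := by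
    intro k hk s hs
    have m1 := hmem k hk.le
    have m2 := hmem (k+1) hk
    have ms : s ∈ Icc 0 tf := ⟨m1.1.trans hs.1.le, hs.2.trans m2.2⟩
    have i1 : IntervalIntegrable g volume 0 (t k) := 
      (intervalIntegrable_iff_integrableOn_Ioc_of_le m1.1).2 (hg.mono_set (Ioc_subset_Ioc_right m1.2))
    have i2 : IntervalIntegrable g volume (t k) s := 
      (intervalIntegrable_iff_integrableOn_Ioc_of_le hs.1.le).2 (hg.mono_set (Ioc_subset_Ioc m1.1 ms.2))
    have hz2 : z s = z (t k) + ∫ r in (t k)..s, g r := by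
      rw [hz s ms, hz _ m1, ← intervalIntegral.integral_of_le ms.1, ← intervalIntegral.integral_of_le m1.1,
        add_assoc, intervalIntegral.integral_add_adjacent_intervals i1 i2]
    have e1 : ((s - t k)/2) • (a k + a (k+1)) = ∫ r in (t k)..s, ((1/2:ℝ) • (a k + a (k+1))) := by
      rw [intervalIntegral.integral_const, smul_smul]; congr 1; ring
    rw [hy k hk s hs, hz2, add_sub_add_comm, e1, ← intervalIntegral.integral_sub (by simp) i2]
    refine (norm_add_le _ _).trans (add_le_add le_rfl ?_)
    rw [mul_comm, ← abs_of_pos (sub_pos.2 hs.1)]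
    refine intervalIntegral.norm_integral_le_of_norm_le_const fun r hr => ?_
    rw [uIoc_of_le hs.1.le] at hr
    have hr' : r ∈ Icc (t k) (t (k+1)) := ⟨hr.1.le, hr.2.trans hs.2⟩
    have e2 : (1/2:ℝ) • (a k + a (k+1)) - g r = (1/2:ℝ) • ((a k - g r) + (a (k+1) - g r)) := by
      module
    rw [e2, norm_smul]
    have b1 := ha k hk r hr'
    have b2 := ha' k hk r hr'
    have b3 := norm_add_le (a k - g r) (a (k+1) - g r)
    rw [Real.norm_of_nonneg (by norm_num)]
    simp only [he]
    linarith
  have gr := disc_gron N t e L η hL hη ht hs (fun k => norm_nonneg _) h0 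
    (fun k hk => step k hk _ ⟨ht k hk, le_rfl⟩)
  have z00 : z 0 = z0 := by have := hz 0 ⟨le_rfl, htf.le⟩; simpa using this
  have e0 : e 0 = ‖y 0 - z0‖ := by simp [he, h0, z00]
  set B := Real.exp (2 * L * tf) * (‖y 0 - z0‖ + 2 * tf * η) with hB
  have hB0 : 0 ≤ B := by positivity
  have hle : ∀ k ≤ N, e k ≤ B := by
    intro k hk
    refine (gr k hk).2.trans ?_
    rw [e0, hB]
    have h1 := (hmem k hk).2
    have h2 := (hmem k hk).1
    gcongr
  intro s hss
  rcases hss.1.eq_or_lt with h | h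
  · have := hle 0 (by omega)
    simp only [he, h0] at this
    rw [← h]
    have : 0 ≤ tf * η := by positivity
    linarith
  · obtain ⟨k, hk, hsk⟩ := part_loc N t s (by rw [h0, hN]; exact ⟨h, hss.2⟩)
    have s1 := step k hk s hsk
    have s2 := hle k hk.le
    have s3 := hle (k+1) hk
    have s4 := hs k hk
    have d0 : 0 ≤ s - t k := sub_nonneg.2 hsk.1.le
    have d1 : s - t k ≤ t (k+1) - t k := by linarith [hsk.2]
    have d2 : s - t k ≤ tf := by linarith [(hmem k hk.le).1, hss.2]
    have d3 : (s - t k) * L ≤ 1 := (mul_le_mul_of_nonneg_right d1 hL.le).trans s4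
    have f1 : (s - t k) * (L/2 * (e k + e (k+1)) + η) ≤ B + tf * η := by
      have g1 : (s - t k) * η ≤ tf * η := mul_le_mul_of_nonneg_right d2 hη
      have g2 : ((s - t k) * L) * ((e k + e (k+1))/2) ≤ 1 * B := by
        refine mul_le_mul d3 (by linarith) ?_ zero_le_one
        have := norm_nonneg (y (t k) - z (t k))
        have := norm_nonneg (y (t (k+1)) - z (t (k+1)))
        simp only [he]; positivity
      linarith
    linarith

theorem energy_bound {E : Type*} [NormedAddCommGroup E] [NormedSpace ℝ E] (N : ℕ) (t : ℕ → ℝ) (ht : ∀ k < N, t k < t (k+1))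
    (y d x' φ : ℝ → E) (av : ℕ → E) (T : E →L[ℝ] E) (η ε : ℝ) (hη : 0 < η) (hε : 0 < ε)
    (hy : ∀ k < N, ∀ s ∈ Ioo (t k) (t (k+1)), (t (k+1) - t k)⁻¹ • (y (t (k+1)) - y (t k)) = d s)
    (hav : ∀ k < N, ∀ s ∈ Ioo (t k) (t (k+1)), ‖av k - φ s‖ ≤ ε)
    (hi : IntegrableOn (fun s => ‖d s - x' s‖^2) (Ioc (t 0) (t N)))
    (hg : IntegrableOn (fun s => ‖T (φ s - x' s)‖^2) (Ioc (t 0) (t N))) :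
    |∑ k ∈ Finset.range N, (t (k+1) - t k) * ‖T ((t (k+1) - t k)⁻¹ • (y (t (k+1)) - y (t k)) - av k)‖^2
      - ∫ s in Ioc (t 0) (t N), ‖T (φ s - x' s)‖^2| ≤ 
      (1 + η⁻¹) * (2 * ‖T‖^2) * ((∫ s in Ioc (t 0) (t N), ‖d s - x' s‖^2) + ε^2 * (t N - t 0)) 
        + η * ∫ s in Ioc (t 0) (t N), ‖T (φ s - x' s)‖^2 := by
  have hmem := part_mem N t ht
  have h0N : t 0 ≤ t N := (hmem 0 (by omega)).2
  have hc : IntegrableOn (fun s : ℝ => ε^2) (Ioc (t 0) (t N)) := integrable_const _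
  have e : (1 + η⁻¹) * (2 * ‖T‖^2) * ((∫ s in Ioc (t 0) (t N), ‖d s - x' s‖^2) + ε^2 * (t N - t 0)) 
        + η * ∫ s in Ioc (t 0) (t N), ‖T (φ s - x' s)‖^2 = ∫ s in Ioc (t 0) (t N), ((1 + η⁻¹) * (2 * ‖T‖^2) * (‖d s - x' s‖^2 + ε^2) + η * ‖T (φ s - x' s)‖^2) := by
    have hic : IntegrableOn (fun s => ‖d s - x' s‖^2 + ε^2) (Ioc (t 0) (t N)) := hi.add hc
    rw [integral_add (hic.const_mul _) (hg.const_mul _), integral_const_mul, integral_const_mul, integral_add hi hc]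
    simp [h0N, mul_comm]
  rw [e]
  refine riemann_bound N t ht _ _ _ h0N hg (((hi.add hc).const_mul _).add (hg.const_mul _)) hmem ?_
  intro k hk s hs
  rw [hy k hk s hs]
  set A := T (d s - av k) with hA
  set B := T (φ s - x' s) with hB
  have hv : ‖A + B‖ ≤ ‖T‖ * (‖d s - x' s‖ + ε) := by
    rw [hA, hB, ← map_add]
    refine (T.le_opNorm _).trans (mul_le_mul_of_nonneg_left ?_ (norm_nonneg _))
    have : d s - av k + (φ s - x' s) = (d s - x' s) - (av k - φ s) := by abel
    rw [this]
    exact (norm_sub_le _ _).trans (add_le_add le_rfl (hav k hk s hs))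
  have hv2 : ‖A + B‖^2 ≤ (2 * ‖T‖^2) * (‖d s - x' s‖^2 + ε^2) := by
    have h1 : ‖A + B‖^2 ≤ (‖T‖ * (‖d s - x' s‖ + ε))^2 := pow_le_pow_left₀ (norm_nonneg _) hv 2
    nlinarith [mul_nonneg (sq_nonneg ‖T‖) (sq_nonneg (‖d s - x' s‖ - ε))]
  have hq : |‖A‖^2 - ‖B‖^2| ≤ (1 + η⁻¹) * ‖A+B‖^2 + η * ‖B‖^2 := by
    have h1 : ‖A‖ ≤ ‖A + B‖ + ‖B‖ := by
      have := norm_sub_le (A + B) B; rwa [add_sub_cancel_right] at this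
    have h2 : ‖B‖ ≤ ‖A + B‖ + ‖A‖ := by
      have := norm_sub_le (A + B) A; rwa [add_sub_cancel_left] at this
    set v := ‖A + B‖
    have v0 : 0 ≤ v := norm_nonneg _
    have a0 := norm_nonneg A
    have b0 := norm_nonneg B
    have h3 : 2 * v * ‖B‖ ≤ η⁻¹ * v^2 + η * ‖B‖^2 := by
      have : η⁻¹ * v^2 + η * ‖B‖^2 - 2 * v * ‖B‖ = η⁻¹ * (v - η * ‖B‖)^2 := by field_simp; ring
      have h : 0 ≤ η⁻¹ * (v - η * ‖B‖)^2 := by positivity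
      linarith
    have h4 : |‖A‖^2 - ‖B‖^2| ≤ v^2 + 2 * v * ‖B‖ := by
      rw [abs_le]; constructor
      · by_cases hvb : v ≤ ‖B‖
        · nlinarith
        · nlinarith
      · nlinarith
    nlinarith
  have hη1 : 0 ≤ 1 + η⁻¹ := by positivity
  have := mul_le_mul_of_nonneg_left hv2 hη1
  linarith

set_option maxHeartbeats 2000000 in
/-- continuous convergence of the trapezoidally-discretized
log-posteriors: if `(x̂_i, ζ_i, ϑ_i) → (x, z₀, θ)` in `W²_n × ℝ^q × ℝ^m` with
`ϑ_i ∈ S` and `x̂_i ∈ PL(𝒫_i)`, then `ℓ̂_i(x̂_i, ζ_i, ϑ_i) → ℓ(x, z₀, θ)` in `ℝ̄`.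
Piecewise linear paths are encoded by their piecewise constant derivatives `d i`,
`W²` functions by function–derivative pairs, `ẑ_i` and `z` are the
trapezoidally-discretized clean-state paths resp. the solution of the clean-state
ODE, and `Dxf` is the Jacobian `∇ₓ f`. -/
theorem stmt13 {n q m : ℕ} (tf : ℝ) (htf : 0 < tf)
    -- nested partitions with vanishing mesh
    (N : ℕ → ℕ) (hN1 : ∀ i, 1 ≤ N i) (tP : ℕ → ℕ → ℝ)
    (htP0 : ∀ i, tP i 0 = 0) (htPN : ∀ i, tP i (N i) = tf)
    (htPmono : ∀ i, ∀ k < N i, tP i k < tP i (k + 1))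
    (hnested : ∀ i, ∀ k ≤ N i, ∃ k' ≤ N (i + 1), tP (i + 1) k' = tP i k)
    (hmesh : Tendsto (fun i => ⨆ k : Fin (N i), (tP i (k.1 + 1) - tP i k.1))
      atTop (nhds 0))
    -- closed parameter set
    (S : Set (EuclideanSpace ℝ (Fin m))) (hS : IsClosed S)
    -- dynamics and their regularity
    (f : ℝ → EuclideanSpace ℝ (Fin n) → EuclideanSpace ℝ (Fin q) →
      EuclideanSpace ℝ (Fin m) → EuclideanSpace ℝ (Fin n))
    (h : ℝ → EuclideanSpace ℝ (Fin n) → EuclideanSpace ℝ (Fin q) →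
      EuclideanSpace ℝ (Fin m) → EuclideanSpace ℝ (Fin q))
    (hfc : Continuous fun p : ℝ × EuclideanSpace ℝ (Fin n) × EuclideanSpace ℝ (Fin q) ×
      EuclideanSpace ℝ (Fin m) => f p.1 p.2.1 p.2.2.1 p.2.2.2)
    (hhc : Continuous fun p : ℝ × EuclideanSpace ℝ (Fin n) × EuclideanSpace ℝ (Fin q) ×
      EuclideanSpace ℝ (Fin m) => h p.1 p.2.1 p.2.2.1 p.2.2.2)
    (ρf ρh : ℝ → ℝ)
    (hρ : Tendsto (fun ε => ρf ε + ρh ε) (nhdsWithin 0 (Ioi 0)) (nhds 0))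
    (hfu : ∀ ε > (0:ℝ), ∀ t ∈ Icc (0:ℝ) tf, ∀ t' ∈ Icc (0:ℝ) tf,
      ∀ (a a' : EuclideanSpace ℝ (Fin n)) (b b' : EuclideanSpace ℝ (Fin q))
        (c c' : EuclideanSpace ℝ (Fin m)), c ∈ S → c' ∈ S →
      |t - t'| ≤ ε → ‖a - a'‖ ≤ ε → ‖b - b'‖ ≤ ε → ‖c - c'‖ ≤ ε →
      ‖f t a b c - f t' a' b' c'‖ ≤ ρf ε)
    (hhu : ∀ ε > (0:ℝ), ∀ t ∈ Icc (0:ℝ) tf, ∀ t' ∈ Icc (0:ℝ) tf,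
      ∀ (a a' : EuclideanSpace ℝ (Fin n)) (b b' : EuclideanSpace ℝ (Fin q))
        (c c' : EuclideanSpace ℝ (Fin m)), c ∈ S → c' ∈ S →
      |t - t'| ≤ ε → ‖a - a'‖ ≤ ε → ‖b - b'‖ ≤ ε → ‖c - c'‖ ≤ ε →
      ‖h t a b c - h t' a' b' c'‖ ≤ ρh ε)
    (Lf Lh : ℝ) (hLf : 0 < Lf) (hLh : 0 < Lh)
    (hfLip : ∀ θ' ∈ S, ∀ t ∈ Icc (0:ℝ) tf,
      ∀ (a a' : EuclideanSpace ℝ (Fin n)) (b b' : EuclideanSpace ℝ (Fin q)),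
      ‖f t a b θ' - f t a' b' θ'‖ ≤ Lf * (‖a - a'‖ + ‖b - b'‖))
    (hhLip : ∀ θ' ∈ S, ∀ t ∈ Icc (0:ℝ) tf,
      ∀ (a a' : EuclideanSpace ℝ (Fin n)) (b b' : EuclideanSpace ℝ (Fin q)),
      ‖h t a b θ' - h t a' b' θ'‖ ≤ Lh * (‖a - a'‖ + ‖b - b'‖))
    (hmeshLip : ∀ i, ∀ k < N i, (Lf + Lh) * (tP i (k + 1) - tP i k) < 2)
    -- the Jacobian of `f` with respect to its second argument
    (Dxf : ℝ → EuclideanSpace ℝ (Fin n) → EuclideanSpace ℝ (Fin q) →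
      EuclideanSpace ℝ (Fin m) →
      (EuclideanSpace ℝ (Fin n) →L[ℝ] EuclideanSpace ℝ (Fin n)))
    (hDxf : ∀ (t : ℝ) (a : EuclideanSpace ℝ (Fin n)) (b : EuclideanSpace ℝ (Fin q))
      (c : EuclideanSpace ℝ (Fin m)), HasFDerivAt (fun ξ => f t ξ b c) (Dxf t a b c) a)
    (hDxfc : Continuous fun p : ℝ × EuclideanSpace ℝ (Fin n) ×
      EuclideanSpace ℝ (Fin q) × EuclideanSpace ℝ (Fin m) =>
      Dxf p.1 p.2.1 p.2.2.1 p.2.2.2)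
    -- measurement likelihood: nonnegative, continuous w.r.t. the supremum norms
    (ψ : (ℝ → EuclideanSpace ℝ (Fin n)) → (ℝ → EuclideanSpace ℝ (Fin q)) →
      EuclideanSpace ℝ (Fin m) → ℝ)
    (hψ0 : ∀ a b c, 0 ≤ ψ a b c)
    (hψc : ∀ (a : ℝ → EuclideanSpace ℝ (Fin n)) (b : ℝ → EuclideanSpace ℝ (Fin q))
      (c : EuclideanSpace ℝ (Fin m)), ContinuousOn a (Icc 0 tf) →
      ContinuousOn b (Icc 0 tf) → ∀ ε > (0:ℝ), ∃ δ > (0:ℝ),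
      ∀ (a' : ℝ → EuclideanSpace ℝ (Fin n)) (b' : ℝ → EuclideanSpace ℝ (Fin q))
        (c' : EuclideanSpace ℝ (Fin m)), ContinuousOn a' (Icc 0 tf) →
        ContinuousOn b' (Icc 0 tf) →
        (∀ t ∈ Icc (0:ℝ) tf, ‖a' t - a t‖ ≤ δ) →
        (∀ t ∈ Icc (0:ℝ) tf, ‖b' t - b t‖ ≤ δ) → ‖c' - c‖ ≤ δ →
        |ψ a' b' c' - ψ a b c| ≤ ε)
    -- prior: nonnegative, continuous, vanishing outside `int S`
    (pr : EuclideanSpace ℝ (Fin n) → EuclideanSpace ℝ (Fin q) →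
      EuclideanSpace ℝ (Fin m) → ℝ)
    (hpr0 : ∀ a b c, 0 ≤ pr a b c)
    (hprc : Continuous fun p : EuclideanSpace ℝ (Fin n) × EuclideanSpace ℝ (Fin q) ×
      EuclideanSpace ℝ (Fin m) => pr p.1 p.2.1 p.2.2)
    (hprv : ∀ a b c, c ∉ interior S → pr a b c = 0)
    -- invertible diffusion matrix
    (G : EuclideanSpace ℝ (Fin n) ≃L[ℝ] EuclideanSpace ℝ (Fin n))
    -- the limit point `(x, z₀, θ)` with `θ ∈ S`
    (x x' : ℝ → EuclideanSpace ℝ (Fin n))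
    (hInt : IntegrableOn x' (Icc 0 tf))
    (hL2 : IntegrableOn (fun t => ‖x' t‖ ^ 2) (Icc 0 tf))
    (hAC : ∀ t ∈ Icc (0:ℝ) tf, x t = x 0 + ∫ s in Ioc (0:ℝ) t, x' s)
    (z0 : EuclideanSpace ℝ (Fin q))
    (θ : EuclideanSpace ℝ (Fin m)) (hθS : θ ∈ S)
    -- the solution of the clean-state ODE at the limit point
    (z : ℝ → EuclideanSpace ℝ (Fin q)) (hzc : ContinuousOn z (Icc 0 tf))
    (hz : ∀ t ∈ Icc (0:ℝ) tf, z t = z0 + ∫ s in Ioc (0:ℝ) t, h s (x s) (z s) θ)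
    -- the approximating sequence, `x̂_i ∈ PL(𝒫_i)` with derivative `d i`, `ϑ_i ∈ S`
    (xh d : ℕ → ℝ → EuclideanSpace ℝ (Fin n))
    (hdpc : ∀ i, ∀ k < N i, ∃ b : EuclideanSpace ℝ (Fin n),
      ∀ s ∈ Ico (tP i k) (tP i (k + 1)), d i s = b)
    (hxhAC : ∀ i, ∀ s ∈ Icc (0:ℝ) tf, xh i s = xh i 0 + ∫ u in Ioc (0:ℝ) s, d i u)
    (ζ : ℕ → EuclideanSpace ℝ (Fin q)) (ϑ : ℕ → EuclideanSpace ℝ (Fin m))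
    (hϑS : ∀ i, ϑ i ∈ S)
    (hconv : Tendsto (fun i =>
      Real.sqrt (‖xh i 0 - x 0‖ ^ 2 + ∫ s in Ioc (0:ℝ) tf, ‖d i s - x' s‖ ^ 2)
      + ‖ζ i - z0‖ + ‖ϑ i - θ‖) atTop (nhds 0))
    -- the associated trapezoidally-discretized clean-state paths
    (zh : ℕ → ℝ → EuclideanSpace ℝ (Fin q))
    (hzh0 : ∀ i, zh i 0 = ζ i)
    (hzhrec : ∀ i, ∀ k < N i, ∀ s ∈ Ioc (tP i k) (tP i (k + 1)),
      zh i s = zh i (tP i k) + ((s - tP i k) / 2) •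
        (h (tP i k) (xh i (tP i k)) (zh i (tP i k)) (ϑ i) +
         h (tP i (k + 1)) (xh i (tP i (k + 1))) (zh i (tP i (k + 1))) (ϑ i))) :
    Tendsto (fun i =>
      elog (ψ (xh i) (zh i) (ϑ i)) + elog (pr (xh i 0) (ζ i) (ϑ i))
        + (∑ k ∈ Finset.range (N i), elog (LinearMap.det
            (ContinuousLinearMap.toLinearMap
              ((1 : EuclideanSpace ℝ (Fin n) →L[ℝ] EuclideanSpace ℝ (Fin n))
                - ((tP i (k + 1) - tP i k) / 2) •
                  Dxf (tP i (k + 1)) (xh i (tP i (k + 1))) (zh i (tP i (k + 1))) (ϑ i)))))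
        - ((((1:ℝ) / 2) * ∑ k ∈ Finset.range (N i), (tP i (k + 1) - tP i k) *
            ‖G.symm ((tP i (k + 1) - tP i k)⁻¹ • (xh i (tP i (k + 1)) - xh i (tP i k))
              - ((1:ℝ) / 2) • f (tP i k) (xh i (tP i k)) (zh i (tP i k)) (ϑ i)
              - ((1:ℝ) / 2) •
                f (tP i (k + 1)) (xh i (tP i (k + 1))) (zh i (tP i (k + 1))) (ϑ i))‖ ^ 2
            : ℝ) : EReal))
      atTop
      (nhds (elog (ψ x z θ) + elog (pr (x 0) z0 θ)
        - ((((1:ℝ) / 2) * ∫ t in Ioc (0:ℝ) tf,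
            ‖G.symm (f t (x t) (z t) θ - x' t)‖ ^ 2 : ℝ) : EReal)
        - ((((1:ℝ) / 2) * ∫ t in Ioc (0:ℝ) tf,
            LinearMap.trace ℝ (EuclideanSpace ℝ (Fin n))
              (ContinuousLinearMap.toLinearMap (Dxf t (x t) (z t) θ)) : ℝ) : EReal))) := by
  have hmemP : ∀ i, ∀ k ≤ N i, tP i k ∈ Icc (0:ℝ) tf := by
    intro i
    have := part_mem (N i) (tP i) (htPmono i)
    rwa [htP0, htPN] at this
  -- mesh
  have hM : ∀ ε > (0:ℝ), ∀ᶠ i in atTop, ∀ k < N i, tP i (k+1) - tP i k ≤ ε := by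
    intro ε hε
    filter_upwards [hmesh.eventually_lt_const hε] with i hi k hk
    refine le_trans ?_ hi.le
    exact le_ciSup (f := fun k : Fin (N i) => tP i (k.1+1) - tP i k.1) (Set.finite_range _).bddAbove ⟨k, hk⟩
  -- components of convergence
  have hDnn : ∀ i, 0 ≤ ∫ s in Ioc (0:ℝ) tf, ‖d i s - x' s‖ ^ 2 := fun i =>
    integral_nonneg fun s => by positivity
  have hsq : Tendsto (fun i => Real.sqrt (‖xh i 0 - x 0‖ ^ 2 + ∫ s in Ioc (0:ℝ) tf, ‖d i s - x' s‖ ^ 2)) atTop (nhds 0) := by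
    refine squeeze_zero (fun i => Real.sqrt_nonneg _) (fun i => ?_) hconv
    have := norm_nonneg (ζ i - z0); have := norm_nonneg (ϑ i - θ); linarith
  have hζ : Tendsto (fun i => ‖ζ i - z0‖) atTop (nhds 0) := by
    refine squeeze_zero (fun i => norm_nonneg _) (fun i => ?_) hconv
    have := Real.sqrt_nonneg (‖xh i 0 - x 0‖ ^ 2 + ∫ s in Ioc (0:ℝ) tf, ‖d i s - x' s‖ ^ 2)
    have := norm_nonneg (ϑ i - θ); linarith
  have hϑ : Tendsto (fun i => ‖ϑ i - θ‖) atTop (nhds 0) := by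
    refine squeeze_zero (fun i => norm_nonneg _) (fun i => ?_) hconv
    have := Real.sqrt_nonneg (‖xh i 0 - x 0‖ ^ 2 + ∫ s in Ioc (0:ℝ) tf, ‖d i s - x' s‖ ^ 2)
    have := norm_nonneg (ζ i - z0); linarith
  have hx0 : Tendsto (fun i => ‖xh i 0 - x 0‖) atTop (nhds 0) := by
    refine squeeze_zero (fun i => norm_nonneg _) (fun i => ?_) hsq
    apply Real.le_sqrt_of_sq_le; linarith [hDnn i]
  have hD : Tendsto (fun i => ∫ s in Ioc (0:ℝ) tf, ‖d i s - x' s‖ ^ 2) atTop (nhds 0) := by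
    have h2 := hsq.pow 2
    rw [zero_pow two_ne_zero] at h2
    refine squeeze_zero hDnn (fun i => ?_) h2
    have := hDnn i
    rw [Real.sq_sqrt (by positivity)]
    have := sq_nonneg ‖xh i 0 - x 0‖
    linarith
  -- integrability
  have hIntc : IntegrableOn x' (Ioc 0 tf) := hInt.mono_set Ioc_subset_Icc_self
  have hL2c : IntegrableOn (fun t => ‖x' t‖ ^ 2) (Ioc 0 tf) := hL2.mono_set Ioc_subset_Icc_self
  have hdI : ∀ i, IntegrableOn (d i) (Ioc 0 tf) ∧ IntegrableOn (fun s => ‖d i s - x' s‖^2) (Ioc 0 tf) := by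
    intro i
    have := step_int (N i) (tP i) (htPmono i) (d i) x' (hdpc i) (by rw [htP0, htPN]; exact htf.le)
      (by rw [htP0, htPN]; exact hIntc) (by rw [htP0, htPN]; exact hL2c)
    rwa [htP0, htPN] at this
  -- sup convergence of x
  have hX : ∀ ε > (0:ℝ), ∀ᶠ i in atTop, ∀ t ∈ Icc (0:ℝ) tf, ‖xh i t - x t‖ ≤ ε := by
    intro ε hε
    set η := ε / (3 * tf) with hη
    have hη0 : 0 < η := by positivity
    have h1 := hx0.eventually_lt_const (show (0:ℝ) < ε/3 by positivity)
    have h2 := hD.eventually_lt_const (show (0:ℝ) < η * (ε/3) by positivity)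
    filter_upwards [h1, h2] with i h1 h2 t ht
    refine (sup_bound tf htf (xh i) (d i) x x' (hdI i).1 hIntc (hdI i).2 (hxhAC i) hAC η hη0 t ht).trans ?_
    have h3 : η⁻¹ * (∫ s in Ioc 0 tf, ‖d i s - x' s‖^2) ≤ ε/3 := by
      rw [inv_mul_le_iff₀ hη0]; exact h2.le
    have h4 : η * tf = ε/3 := by rw [hη]; field_simp
    linarith
  have hxc : ContinuousOn x (Icc 0 tf) := by
    have h1 := intervalIntegral.continuousOn_primitive hInt
    exact (continuousOn_const.add h1).congr hAC
  have hxhc : ∀ i, ContinuousOn (xh i) (Icc 0 tf) := by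
    intro i
    have h1 := intervalIntegral.continuousOn_primitive ((integrableOn_Icc_iff_integrableOn_Ioc (by simp)).2 (hdI i).1)
    exact (continuousOn_const.add h1).congr (hxhAC i)
  have hzhc : ∀ i, ContinuousOn (zh i) (Icc 0 tf) := by
    intro i
    have := pl_cont (N i) (tP i) (htPmono i) (zh i) _ (hzhrec i)
    rwa [htP0, htPN] at this
  have hcurve : ContinuousOn (fun s => (s, x s, z s, θ)) (Icc 0 tf) := by fun_prop
  have hzeroT : (0:ℝ) ∈ Icc (0:ℝ) tf := ⟨le_rfl, htf.le⟩
  have hz00 : z 0 = z0 := by have := hz 0 hzeroT; simpa using this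
  -- sup convergence of z
  have hZ : ∀ ε > (0:ℝ), ∀ᶠ i in atTop, ∀ t ∈ Icc (0:ℝ) tf, ‖zh i t - z t‖ ≤ ε := by
    intro ε hε
    set C := Real.exp (2 * Lh * tf) with hC
    have hC0 : 0 < C := Real.exp_pos _
    set η := ε / (3 * (4 * C * tf + tf)) with hη
    have hη0 : 0 < η := by positivity
    obtain ⟨δ, hδ, H⟩ := curve_unif tf x z θ hxc hzc _ hhc η hη0
    have e1 := hζ.eventually_lt_const (show (0:ℝ) < ε/(3 * (2 * C)) by positivity)
    filter_upwards [hX δ hδ, hM δ hδ, hM (1/Lh) (by positivity), hϑ.eventually_lt_const hδ, e1] with i a1 a2 a3 a4 a5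
    have hA : ∀ r ∈ Icc (0:ℝ) tf, ∀ s ∈ Icc (0:ℝ) tf, |r - s| ≤ δ → 
        ‖h r (xh i r) (zh i r) (ϑ i) - h s (x s) (z s) θ‖ ≤ Lh * ‖zh i r - z r‖ + η := by
      intro r hr s hs hrs
      have b1 := H s hs r hr (xh i r) (z r) (ϑ i) hrs (a1 r hr) (by simp [hδ.le]) a4.le
      have b2 := hhLip (ϑ i) (hϑS i) r hr (xh i r) (xh i r) (zh i r) (z r)
      rw [sub_self, norm_zero, zero_add] at b2
      have b3 := norm_add_le (h r (xh i r) (zh i r) (ϑ i) - h r (xh i r) (z r) (ϑ i)) (h r (xh i r) (z r) (ϑ i) - h s (x s) (z s) θ)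
      rw [sub_add_sub_cancel] at b3
      simp only at b1
      linarith
    have hgI : IntegrableOn (fun s => h s (x s) (z s) θ) (Ioc 0 tf) :=
      ((hhc.comp_continuousOn hcurve).integrableOn_Icc).mono_set Ioc_subset_Icc_self
    have key := z_err tf htf (N i) (tP i) (htPmono i) (htP0 i) (htPN i) (zh i) z (fun s => h s (x s) (z s) θ)
      (fun k => h (tP i k) (xh i (tP i k)) (zh i (tP i k)) (ϑ i)) Lh η hLh hη0.le
      (fun k hk => by have := a3 k hk; rwa [le_div_iff₀ hLh] at this) z0 hgI hz (hzhrec i)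
      (fun k hk s hs => by
        refine hA _ (hmemP i k hk.le) s ⟨(hmemP i k hk.le).1.trans hs.1, hs.2.trans (hmemP i (k+1) hk).2⟩ ?_
        have := a2 k hk
        rw [abs_le]; constructor <;> linarith [hs.1, hs.2])
      (fun k hk s hs => by
        refine hA _ (hmemP i (k+1) hk) s ⟨(hmemP i k hk.le).1.trans hs.1, hs.2.trans (hmemP i (k+1) hk).2⟩ ?_
        have := a2 k hk
        rw [abs_le]; constructor <;> linarith [hs.1, hs.2])
    intro s hs
    refine (key s hs).trans ?_
    rw [hzh0 i, ← hC]
    have q1 : 2 * C * ‖ζ i - z0‖ ≤ ε/3 := by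
      rw [lt_div_iff₀ (by positivity)] at a5
      linarith
    have q2 : (4 * C * tf + tf) * η = ε/3 := by rw [hη]; field_simp
    linarith
  -- uniform closeness of continuous integrands
  have hFG : ∀ {Y : Type} [NormedAddCommGroup Y] (F : ℝ × EuclideanSpace ℝ (Fin n) × EuclideanSpace ℝ (Fin q) ×
      EuclideanSpace ℝ (Fin m) → Y), Continuous F → ∀ ε > (0:ℝ), ∀ᶠ i in atTop, ∀ k < N i, 
      ∀ r ∈ Icc (tP i k) (tP i (k+1)), ∀ s ∈ Icc (tP i k) (tP i (k+1)),
      ‖F (r, xh i r, zh i r, ϑ i) - F (s, x s, z s, θ)‖ ≤ ε := by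
    intro Y _ F hF ε hε
    obtain ⟨δ, hδ, H⟩ := curve_unif tf x z θ hxc hzc F hF ε hε
    filter_upwards [hX δ hδ, hM δ hδ, hZ δ hδ, hϑ.eventually_lt_const hδ] with i a1 a2 a3 a4 k hk r hr s hs
    have m1 : ∀ s ∈ Icc (tP i k) (tP i (k+1)), s ∈ Icc (0:ℝ) tf := fun s hs =>
      ⟨(hmemP i k hk.le).1.trans hs.1, hs.2.trans (hmemP i (k+1) hk).2⟩
    refine H s (m1 s hs) r (m1 r hr) _ _ _ ?_ (a1 r (m1 r hr)) (a3 r (m1 r hr)) a4.le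
    have := a2 k hk
    rw [abs_le]; constructor <;> linarith [hs.1, hs.2, hr.1, hr.2]
  -- ψ
  have Tψ : Tendsto (fun i => ψ (xh i) (zh i) (ϑ i)) atTop (nhds (ψ x z θ)) := by
    rw [Metric.tendsto_atTop']
    intro ε hε
    obtain ⟨δ, hδ, H⟩ := hψc x z θ hxc hzc (ε/2) (by positivity)
    have := ((hX δ hδ).and (hZ δ hδ)).and (hϑ.eventually_lt_const hδ)
    obtain ⟨i0, hi0⟩ := eventually_atTop.1 this
    refine ⟨i0, fun i hi => ?_⟩
    obtain ⟨⟨b1, b2⟩, b3⟩ := hi0 i hi.le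
    rw [Real.dist_eq]
    have := H (xh i) (zh i) (ϑ i) (hxhc i) (hzhc i) b1 b2 b3.le
    linarith
  -- prior
  have Tpr : Tendsto (fun i => pr (xh i 0) (ζ i) (ϑ i)) atTop (nhds (pr (x 0) z0 θ)) := by
    have t1 := tendsto_iff_norm_sub_tendsto_zero.2 hx0
    have t2 := tendsto_iff_norm_sub_tendsto_zero.2 hζ
    have t3 := tendsto_iff_norm_sub_tendsto_zero.2 hϑ
    exact (hprc.tendsto (x 0, z0, θ)).comp (t1.prodMk_nhds (t2.prodMk_nhds t3))
  -- energy
  have hfcurve : ContinuousOn (fun s => f s (x s) (z s) θ) (Icc 0 tf) := hfc.comp_continuousOn hcurve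
  have hgI : IntegrableOn (fun s => ‖G.symm (f s (x s) (z s) θ - x' s)‖^2) (Ioc 0 tf) := by
    have hf1 : IntegrableOn (fun s => f s (x s) (z s) θ) (Ioc 0 tf) :=
      hfcurve.integrableOn_Icc.mono_set Ioc_subset_Icc_self
    have hf2 : IntegrableOn (fun s => ‖f s (x s) (z s) θ‖^2) (Ioc 0 tf) :=
      (hfcurve.norm.pow 2).integrableOn_Icc.mono_set Ioc_subset_Icc_self
    have h3 : IntegrableOn (fun s => ‖(G.symm : EuclideanSpace ℝ (Fin n) →L[ℝ] EuclideanSpace ℝ (Fin n))‖^2 * (2 * ‖f s (x s) (z s) θ‖^2 + 2 * ‖x' s‖^2)) (Ioc 0 tf) := 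
      ((hf2.const_mul 2).add (hL2c.const_mul 2)).const_mul _
    refine Integrable.mono h3 ?_ ?_
    · exact ((G.symm.continuous.comp_aestronglyMeasurable (hf1.sub hIntc).aestronglyMeasurable).norm.pow 2)
    · refine Eventually.of_forall fun s => ?_
      rw [Real.norm_of_nonneg (by positivity), Real.norm_of_nonneg (by positivity)]
      have h4 := (G.symm : EuclideanSpace ℝ (Fin n) →L[ℝ] EuclideanSpace ℝ (Fin n)).le_opNorm (f s (x s) (z s) θ - x' s)
      have h5 := pow_le_pow_left₀ (norm_nonneg _) h4 2
      rw [mul_pow] at h5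
      refine h5.trans (mul_le_mul_of_nonneg_left ?_ (by positivity))
      have := norm_sub_le (f s (x s) (z s) θ) (x' s)
      nlinarith [norm_nonneg (f s (x s) (z s) θ - x' s), sq_nonneg (‖f s (x s) (z s) θ‖ - ‖x' s‖), norm_nonneg (f s (x s) (z s) θ), norm_nonneg (x' s)]
  have hslope : ∀ i, ∀ k < N i, ∀ s ∈ Ioo (tP i k) (tP i (k+1)), 
      (tP i (k+1) - tP i k)⁻¹ • (xh i (tP i (k+1)) - xh i (tP i k)) = d i s := by
    intro i k hk s hs
    have hpos : 0 < tP i (k+1) - tP i k := sub_pos.2 (htPmono i k hk)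
    obtain ⟨b, hb⟩ := hdpc i k hk
    have m1 := hmemP i k hk.le
    have m2 := hmemP i (k+1) hk
    have i1 : IntervalIntegrable (d i) volume 0 (tP i k) := 
      (intervalIntegrable_iff_integrableOn_Ioc_of_le m1.1).2 ((hdI i).1.mono_set (Ioc_subset_Ioc_right m1.2))
    have i2 : IntervalIntegrable (d i) volume (tP i k) (tP i (k+1)) := 
      (intervalIntegrable_iff_integrableOn_Ioc_of_le (htPmono i k hk).le).2 ((hdI i).1.mono_set (Ioc_subset_Ioc m1.1 m2.2))
    have e1 : xh i (tP i (k+1)) - xh i (tP i k) = (tP i (k+1) - tP i k) • b := by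
      rw [hxhAC i _ m1, hxhAC i _ m2, ← intervalIntegral.integral_of_le m1.1, ← intervalIntegral.integral_of_le m2.1,
        ← intervalIntegral.integral_add_adjacent_intervals i1 i2, 
        intervalIntegral.integral_congr_Ioo_of_le (g := fun _ => b) (htPmono i k hk).le (fun r hr => hb r ⟨hr.1.le, hr.2⟩),
        intervalIntegral.integral_const]
      abel
    rw [e1, smul_smul, inv_mul_cancel₀ hpos.ne', one_smul, hb s ⟨hs.1.le, hs.2⟩]
  have TE : Tendsto (fun i => ∑ k ∈ Finset.range (N i), (tP i (k + 1) - tP i k) *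
            ‖G.symm ((tP i (k + 1) - tP i k)⁻¹ • (xh i (tP i (k + 1)) - xh i (tP i k))
              - ((1:ℝ) / 2) • f (tP i k) (xh i (tP i k)) (zh i (tP i k)) (ϑ i)
              - ((1:ℝ) / 2) •
                f (tP i (k + 1)) (xh i (tP i (k + 1))) (zh i (tP i (k + 1))) (ϑ i))‖ ^ 2) atTop
      (nhds (∫ t in Ioc (0:ℝ) tf, ‖G.symm (f t (x t) (z t) θ - x' t)‖ ^ 2)) := by
    rw [Metric.tendsto_nhds]
    intro ε' hε'
    set I0 := ∫ t in Ioc (0:ℝ) tf, ‖G.symm (f t (x t) (z t) θ - x' t)‖ ^ 2 with hI0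
    have hI0n : 0 ≤ I0 := integral_nonneg fun s => by positivity
    set T : EuclideanSpace ℝ (Fin n) →L[ℝ] EuclideanSpace ℝ (Fin n) := (G.symm : EuclideanSpace ℝ (Fin n) →L[ℝ] EuclideanSpace ℝ (Fin n)) with hT
    set η := ε' / (4 * (I0 + 1)) with hη
    have hη0 : 0 < η := by positivity
    set K := (1 + η⁻¹) * (2 * ‖T‖^2) with hK
    have hK0 : 0 ≤ K := by positivity
    set ε := min 1 (ε' / (4 * (K * tf + 1))) with hε
    have hε0 : 0 < ε := by positivity
    filter_upwards [hFG _ hfc ε hε0, hD.eventually_lt_const (show (0:ℝ) < ε' / (4 * (K + 1)) by positivity)] with i a1 a2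
    have key := energy_bound (N i) (tP i) (htPmono i) (xh i) (d i) x' (fun s => f s (x s) (z s) θ)
      (fun k => ((1:ℝ) / 2) • f (tP i k) (xh i (tP i k)) (zh i (tP i k)) (ϑ i) + ((1:ℝ) / 2) •
                f (tP i (k + 1)) (xh i (tP i (k + 1))) (zh i (tP i (k + 1))) (ϑ i)) T η ε hη0 hε0 (hslope i)
      (fun k hk s hs => by
        have hle := (htPmono i k hk).le
        have b1 := a1 k hk (tP i k) ⟨le_rfl, hle⟩ s ⟨hs.1.le, hs.2.le⟩
        have b2 := a1 k hk (tP i (k+1)) ⟨hle, le_rfl⟩ s ⟨hs.1.le, hs.2.le⟩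
        set A := f (tP i k) (xh i (tP i k)) (zh i (tP i k)) (ϑ i)
        set B := f (tP i (k+1)) (xh i (tP i (k+1))) (zh i (tP i (k+1))) (ϑ i)
        have e : ((1:ℝ)/2) • A + ((1:ℝ)/2) • B - f s (x s) (z s) θ = ((1:ℝ)/2) • ((A - f s (x s) (z s) θ) + (B - f s (x s) (z s) θ)) := by module
        rw [e, norm_smul, Real.norm_of_nonneg (by norm_num)]
        have := norm_add_le (A - f s (x s) (z s) θ) (B - f s (x s) (z s) θ)
        linarith)
      (by rw [htP0, htPN]; exact (hdI i).2) (by rw [htP0, htPN]; exact hgI)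
    rw [htP0, htPN] at key
    simp only [← sub_sub] at key
    rw [Real.dist_eq]
    refine lt_of_le_of_lt key ?_
    change K * ((∫ s in Ioc 0 tf, ‖d i s - x' s‖^2) + ε^2 * (tf - 0)) + η * I0 < ε'
    have q1 : K * (∫ s in Ioc 0 tf, ‖d i s - x' s‖^2) ≤ ε'/4 := by
      rw [lt_div_iff₀ (by positivity)] at a2
      nlinarith [hDnn i]
    have q2 : K * tf * ε^2 ≤ ε'/4 := by
      have r1 : ε ≤ 1 := min_le_left _ _
      have r2 : ε ≤ ε' / (4 * (K * tf + 1)) := min_le_right _ _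
      rw [le_div_iff₀ (by positivity)] at r2
      have r3 : ε^2 ≤ ε := by nlinarith
      have r4 : 0 ≤ K * tf := by positivity
      nlinarith
    have q3 : η * I0 ≤ ε'/4 := by
      rw [hη, div_mul_eq_mul_div, div_le_iff₀ (by positivity)]
      nlinarith
    linarith
  -- log det
  have hDcurve : ContinuousOn (fun s => Dxf s (x s) (z s) θ) (Icc 0 tf) := hDxfc.comp_continuousOn hcurve
  obtain ⟨M, hMb⟩ := isCompact_Icc.exists_bound_of_continuousOn hDcurve
  have hM0 : 0 ≤ M := (norm_nonneg _).trans (hMb 0 hzeroT)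
  have hLD : ∀ ε > (0:ℝ), ∀ᶠ i in atTop, ∀ k < N i, 0 < LinearMap.det
            (ContinuousLinearMap.toLinearMap
              ((1 : EuclideanSpace ℝ (Fin n) →L[ℝ] EuclideanSpace ℝ (Fin n))
                - ((tP i (k + 1) - tP i k) / 2) •
                  Dxf (tP i (k + 1)) (xh i (tP i (k + 1))) (zh i (tP i (k + 1))) (ϑ i))) ∧
       |Real.log (LinearMap.det
            (ContinuousLinearMap.toLinearMap
              ((1 : EuclideanSpace ℝ (Fin n) →L[ℝ] EuclideanSpace ℝ (Fin n))
                - ((tP i (k + 1) - tP i k) / 2) •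
                  Dxf (tP i (k + 1)) (xh i (tP i (k + 1))) (zh i (tP i (k + 1))) (ϑ i))))
         + ((tP i (k + 1) - tP i k) / 2) * trL n (Dxf (tP i (k + 1)) (xh i (tP i (k + 1))) (zh i (tP i (k + 1))) (ϑ i))|
         ≤ ε * ((tP i (k + 1) - tP i k) / 2 * (M + 1)) := by
    intro ε hε
    obtain ⟨r, hr, H⟩ := logdet_bound (n := n) ε hε
    filter_upwards [hFG _ hDxfc 1 one_pos, hM (r / (M+1)) (by positivity)] with i a1 a2 k hk
    have hpos : 0 < tP i (k+1) - tP i k := sub_pos.2 (htPmono i k hk)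
    have hle := (htPmono i k hk).le
    have b1 := a1 k hk (tP i (k+1)) ⟨hle, le_rfl⟩ (tP i (k+1)) ⟨hle, le_rfl⟩
    have b2 := hMb _ (hmemP i (k+1) hk)
    set A := Dxf (tP i (k + 1)) (xh i (tP i (k + 1))) (zh i (tP i (k + 1))) (ϑ i) with hA
    set A0 := Dxf (tP i (k + 1)) (x (tP i (k + 1))) (z (tP i (k + 1))) θ
    have b3 : ‖A‖ ≤ M + 1 := by
      have := norm_add_le (A - A0) A0
      rw [sub_add_cancel] at this
      linarith
    set δ := tP i (k+1) - tP i k with hδ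
    have b4 : ‖-(δ/2) • A‖ ≤ δ/2 * (M+1) := by
      rw [norm_smul, norm_neg, Real.norm_of_nonneg (by positivity)]
      exact mul_le_mul_of_nonneg_left b3 (by positivity)
    have b5 : δ/2 * (M+1) ≤ r := by
      have := a2 k hk
      rw [le_div_iff₀ (by positivity)] at this
      nlinarith
    obtain ⟨c1, c2⟩ := H (-(δ/2) • A) (b4.trans b5)
    have e1 : (1 : EuclideanSpace ℝ (Fin n) →L[ℝ] EuclideanSpace ℝ (Fin n)) + -(δ/2) • A = 1 - (δ/2) • A := by
      ext v : 1
      simp [sub_eq_add_neg]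
    rw [e1] at c1 c2
    refine ⟨c1, ?_⟩
    rw [map_smul, smul_eq_mul, neg_mul, sub_neg_eq_add] at c2
    exact c2.trans (mul_le_mul_of_nonneg_left b4 hε.le)
  have TL : Tendsto (fun i => ∑ k ∈ Finset.range (N i), Real.log (LinearMap.det
            (ContinuousLinearMap.toLinearMap
              ((1 : EuclideanSpace ℝ (Fin n) →L[ℝ] EuclideanSpace ℝ (Fin n))
                - ((tP i (k + 1) - tP i k) / 2) •
                  Dxf (tP i (k + 1)) (xh i (tP i (k + 1))) (zh i (tP i (k + 1))) (ϑ i))))) atTop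
      (nhds (-(((1:ℝ) / 2) * ∫ t in Ioc (0:ℝ) tf, trL n (Dxf t (x t) (z t) θ)))) := by
    rw [Metric.tendsto_nhds]
    intro ε' hε'
    set ε := ε' / (tf * (M + 3)) with hε
    have hε0 : 0 < ε := by positivity
    have hTc : Continuous fun p : ℝ × EuclideanSpace ℝ (Fin n) × EuclideanSpace ℝ (Fin q) × EuclideanSpace ℝ (Fin m) => trL n (Dxf p.1 p.2.1 p.2.2.1 p.2.2.2) := (trL n).continuous.comp hDxfc
    have hTI : IntegrableOn (fun s => -((1:ℝ)/2) * trL n (Dxf s (x s) (z s) θ)) (Ioc 0 tf) :=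
      Integrable.const_mul ((hTc.comp_continuousOn hcurve).integrableOn_Icc.mono_set Ioc_subset_Icc_self) _
    filter_upwards [hLD ε hε0, hFG _ hTc ε hε0] with i a1 a2
    have key := riemann_bound (N i) (tP i) (htPmono i) (fun k => (tP i (k+1) - tP i k)⁻¹ * Real.log (LinearMap.det
            (ContinuousLinearMap.toLinearMap
              ((1 : EuclideanSpace ℝ (Fin n) →L[ℝ] EuclideanSpace ℝ (Fin n))
                - ((tP i (k + 1) - tP i k) / 2) •
                  Dxf (tP i (k + 1)) (xh i (tP i (k + 1))) (zh i (tP i (k + 1))) (ϑ i)))))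
      (fun s => -((1:ℝ)/2) * trL n (Dxf s (x s) (z s) θ)) (fun _ => ε * ((M+2)/2)) (by rw [htP0, htPN]; exact htf.le)
      (by rw [htP0, htPN]; exact hTI) (integrable_const _) (part_mem (N i) (tP i) (htPmono i))
      (fun k hk s hs => by
        have hpos : 0 < tP i (k+1) - tP i k := sub_pos.2 (htPmono i k hk)
        have hle := (htPmono i k hk).le
        have b1 := (a1 k hk).2
        have b2 := a2 k hk (tP i (k+1)) ⟨hle, le_rfl⟩ s ⟨hs.1.le, hs.2.le⟩
        simp only [Real.norm_eq_abs] at b1 b2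
        set l := Real.log (LinearMap.det
            (ContinuousLinearMap.toLinearMap
              ((1 : EuclideanSpace ℝ (Fin n) →L[ℝ] EuclideanSpace ℝ (Fin n))
                - ((tP i (k + 1) - tP i k) / 2) •
                  Dxf (tP i (k + 1)) (xh i (tP i (k + 1))) (zh i (tP i (k + 1))) (ϑ i))))
        set τ := trL n (Dxf (tP i (k + 1)) (xh i (tP i (k + 1))) (zh i (tP i (k + 1))) (ϑ i))
        set τ' := trL n (Dxf s (x s) (z s) θ)
        set δ := tP i (k+1) - tP i k
        have c1 : |δ⁻¹ * l + τ/2| ≤ ε * ((M+1)/2) := by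
          have : δ⁻¹ * l + τ/2 = δ⁻¹ * (l + δ/2 * τ) := by field_simp
          rw [this, abs_mul, abs_of_pos (inv_pos.2 hpos), inv_mul_le_iff₀ hpos]
          linarith
        rw [abs_le] at c1 b2 ⊢
        constructor <;> linarith [c1.1, c1.2, b2.1, b2.2])
    rw [htP0, htPN] at key
    have e1 : ∀ k ∈ Finset.range (N i), (tP i (k+1) - tP i k) * ((tP i (k+1) - tP i k)⁻¹ * Real.log (LinearMap.det
            (ContinuousLinearMap.toLinearMap
              ((1 : EuclideanSpace ℝ (Fin n) →L[ℝ] EuclideanSpace ℝ (Fin n))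
                - ((tP i (k + 1) - tP i k) / 2) •
                  Dxf (tP i (k + 1)) (xh i (tP i (k + 1))) (zh i (tP i (k + 1))) (ϑ i))))) = Real.log (LinearMap.det
            (ContinuousLinearMap.toLinearMap
              ((1 : EuclideanSpace ℝ (Fin n) →L[ℝ] EuclideanSpace ℝ (Fin n))
                - ((tP i (k + 1) - tP i k) / 2) •
                  Dxf (tP i (k + 1)) (xh i (tP i (k + 1))) (zh i (tP i (k + 1))) (ϑ i)))) := by
      intro k hk
      have hpos : 0 < tP i (k+1) - tP i k := sub_pos.2 (htPmono i k (Finset.mem_range.1 hk))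
      rw [mul_inv_cancel_left₀ hpos.ne']
    rw [Finset.sum_congr rfl e1, integral_const_mul, neg_mul] at key
    rw [Real.dist_eq]
    refine lt_of_le_of_lt key ?_
    have e2 : ∫ s in Ioc (0:ℝ) tf, ε * ((M+2)/2) = tf * (ε * ((M+2)/2)) := by simp [htf.le]
    rw [e2]
    have e3 : ε * (tf * (M+3)) = ε' := by rw [hε]; field_simp
    have e4 : 0 < ε * tf := by positivity
    nlinarith
  -- assembly
  have TA : Tendsto (fun i => elog (ψ (xh i) (zh i) (ϑ i)) + elog (pr (xh i 0) (ζ i) (ϑ i))) atTop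
      (nhds (elog (ψ x z θ) + elog (pr (x 0) z0 θ))) := by
    have h1 := (continuous_elog.tendsto _).comp Tψ
    have h2 := (continuous_elog.tendsto _).comp Tpr
    exact (EReal.continuousAt_add (p := (elog (ψ x z θ), elog (pr (x 0) z0 θ))) (Or.inl (elog_ne_top _)) 
      (Or.inr (elog_ne_top _))).tendsto.comp (h1.prodMk_nhds h2)
  have TB := (continuous_coe_real_ereal.tendsto _).comp (TL.sub (TE.const_mul ((1:ℝ)/2)))
  have TC := (EReal.continuousAt_add (p := (_, _)) (Or.inr (EReal.coe_ne_bot _)) 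
      (Or.inr (EReal.coe_ne_top _))).tendsto.comp (TA.prodMk_nhds TB)
  have elim : elog (ψ x z θ) + elog (pr (x 0) z0 θ)
        - ((((1:ℝ) / 2) * ∫ t in Ioc (0:ℝ) tf,
            ‖G.symm (f t (x t) (z t) θ - x' t)‖ ^ 2 : ℝ) : EReal)
        - ((((1:ℝ) / 2) * ∫ t in Ioc (0:ℝ) tf,
            LinearMap.trace ℝ (EuclideanSpace ℝ (Fin n))
              (ContinuousLinearMap.toLinearMap (Dxf t (x t) (z t) θ)) : ℝ) : EReal) =
     (elog (ψ x z θ) + elog (pr (x 0) z0 θ)) + ((-(((1:ℝ) / 2) * ∫ t in Ioc (0:ℝ) tf, trL n (Dxf t (x t) (z t) θ)) -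
        ((1:ℝ) / 2) * ∫ t in Ioc (0:ℝ) tf, ‖G.symm (f t (x t) (z t) θ - x' t)‖ ^ 2 : ℝ) : EReal) := by
    simp only [trL_apply]
    rw [sub_eq_add_neg, sub_eq_add_neg, ← EReal.coe_neg, ← EReal.coe_neg, add_assoc, ← EReal.coe_add]
    congr 2
    ring
  rw [elim]
  refine TC.congr' ?_
  filter_upwards [hLD 1 one_pos] with i hi
  have e1 : (∑ k ∈ Finset.range (N i), elog (LinearMap.det
            (ContinuousLinearMap.toLinearMap
              ((1 : EuclideanSpace ℝ (Fin n) →L[ℝ] EuclideanSpace ℝ (Fin n))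
                - ((tP i (k + 1) - tP i k) / 2) •
                  Dxf (tP i (k + 1)) (xh i (tP i (k + 1))) (zh i (tP i (k + 1))) (ϑ i))))) =
      ((∑ k ∈ Finset.range (N i), Real.log (LinearMap.det
            (ContinuousLinearMap.toLinearMap
              ((1 : EuclideanSpace ℝ (Fin n) →L[ℝ] EuclideanSpace ℝ (Fin n))
                - ((tP i (k + 1) - tP i k) / 2) •
                  Dxf (tP i (k + 1)) (xh i (tP i (k + 1))) (zh i (tP i (k + 1))) (ϑ i)))) : ℝ) : EReal) := by
    rw [ereal_coe_sum]
    exact Finset.sum_congr rfl fun k hk => elog_pos (hi k (Finset.mem_range.1 hk)).1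
  rw [e1, sub_eq_add_neg _ (((((1:ℝ) / 2) * _ : ℝ)) : EReal), ← EReal.coe_neg, add_assoc, ← EReal.coe_add, ← sub_eq_add_neg]
  rfl
end

section
/- Let (Ω, ℰ, P) be a probability space, {𝔸_ε}_{ε ∈ ℝ_{>0}} ⊆ ℰ a family of events with P(𝔸_ε) > 0 for every ε > 0, and A : Ω → ℝ a random variable. If for every c ∈ ℝ one has limsup_{ε↓0} E[exp(cA) | 𝔸_ε] ≤ 1, then for every c ∈ ℝ one has lim_{ε↓0} E[exp(cA) | 𝔸_ε] = 1. -/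
open MeasureTheory Filter

/-- Lemma on limits of conditional exponential moments:
if `limsup_{ε↓0} E[exp(cA) | 𝔸_ε] ≤ 1` for every `c ∈ ℝ`, then
`lim_{ε↓0} E[exp(cA) | 𝔸_ε] = 1` for every `c ∈ ℝ`. Conditional expectations of the
nonnegative random variables `exp(cA)` are taken with values in `[0, ∞]`. -/
theorem stmt18 {Ω : Type*} [MeasurableSpace Ω] (P : Measure Ω) [IsProbabilityMeasure P]
    (B : ℝ → Set Ω) (hBmeas : ∀ ε > (0:ℝ), MeasurableSet (B ε))
    (hBpos : ∀ ε > (0:ℝ), 0 < P (B ε))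
    (A : Ω → ℝ) (hA : Measurable A)
    (hup : ∀ c : ℝ, limsup
      (fun ε => (∫⁻ ω in B ε, ENNReal.ofReal (Real.exp (c * A ω)) ∂P) / P (B ε))
      (nhdsWithin 0 (Set.Ioi 0)) ≤ 1) :
    ∀ c : ℝ, Tendsto
      (fun ε => (∫⁻ ω in B ε, ENNReal.ofReal (Real.exp (c * A ω)) ∂P) / P (B ε))
      (nhdsWithin 0 (Set.Ioi 0)) (nhds 1) := by
  intro c
  set F : ℝ → ℝ → ENNReal := fun c ε =>
    (∫⁻ ω in B ε, ENNReal.ofReal (Real.exp (c * A ω)) ∂P) / P (B ε) with hF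
  have hsum : ∀ ε > (0:ℝ), 2 ≤ F c ε + F (-c) ε := by
    intro ε hε
    simp only [hF]
    rw [ENNReal.div_add_div_same, ← lintegral_add_left (by fun_prop),
      ENNReal.le_div_iff_mul_le (Or.inl (hBpos ε hε).ne') (Or.inl (measure_ne_top P _))]
    calc 2 * P (B ε) = ∫⁻ _ in B ε, 2 ∂P := by rw [setLIntegral_const]
      _ ≤ _ := by
        apply lintegral_mono
        intro ω
        dsimp only
        rw [← ENNReal.ofReal_add (Real.exp_pos _).le (Real.exp_pos _).le]
        have h1 := Real.add_one_le_exp (c * A ω)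
        have h2 := Real.add_one_le_exp (-c * A ω)
        rw [← ENNReal.ofReal_ofNat]
        exact ENNReal.ofReal_le_ofReal (by linarith)
  refine tendsto_of_le_liminf_of_limsup_le ?_ (hup c)
  refine le_of_forall_lt fun a ha => ?_
  obtain ⟨b, hab, hb⟩ := exists_between ha
  refine lt_of_lt_of_le hab (le_liminf_of_le (by isBoundedDefault) ?_)
  have hbt : b ≠ ⊤ := (hb.trans ENNReal.one_lt_top).ne
  have h2b : 1 < 2 - b := by
    rw [lt_tsub_iff_right, ← one_add_one_eq_two]
    exact ENNReal.add_lt_add_left ENNReal.one_ne_top hb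
  have hev := eventually_lt_of_limsup_lt (lt_of_le_of_lt (hup (-c)) h2b)
  filter_upwards [hev, self_mem_nhdsWithin] with ε h1 h2
  by_contra h3
  rw [not_le] at h3
  have h4 : F (-c) ε + b < 2 := lt_tsub_iff_right.mp h1
  have h5 := hsum ε h2
  have h6 : F c ε + F (-c) ε ≤ F (-c) ε + b := by
    rw [add_comm]; exact add_le_add le_rfl h3.le
  exact absurd (h5.trans h6) (not_le.mpr h4)
end

section
/- Let (Ω, ℰ, P) be a probability space, {𝔸_ε}_{ε ∈ ℝ_{>0}} ⊆ ℰ a family of events with P(𝔸_ε) > 0 for every ε > 0, and A₁, …, A_n : Ω → ℝ random variables such that for every c ∈ ℝ and every i ∈ {1, …, n} one has limsup_{ε↓0} E[exp(c A_i) | 𝔸_ε] ≤ 1. Then for every c ∈ ℝ one has lim_{ε↓0} E[exp(c A₁ + ⋯ + c A_n) | 𝔸_ε] = 1. -/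
open MeasureTheory Filter

/-- conditional exponential moments of a sum: if
`limsup_{ε↓0} E[exp(c Aᵢ) | 𝔸_ε] ≤ 1` for every `c ∈ ℝ` and every `i`, then
`lim_{ε↓0} E[exp(c A₁ + ⋯ + c A_n) | 𝔸_ε] = 1` for every `c ∈ ℝ`. -/
theorem stmt19 {Ω : Type*} [MeasurableSpace Ω] (P : Measure Ω) [IsProbabilityMeasure P]
    (B : ℝ → Set Ω) (hBmeas : ∀ ε > (0:ℝ), MeasurableSet (B ε))
    (hBpos : ∀ ε > (0:ℝ), 0 < P (B ε))
    (n : ℕ) (A : Fin n → Ω → ℝ) (hA : ∀ i, Measurable (A i))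
    (hup : ∀ c : ℝ, ∀ i : Fin n, limsup
      (fun ε => (∫⁻ ω in B ε, ENNReal.ofReal (Real.exp (c * A i ω)) ∂P) / P (B ε))
      (nhdsWithin 0 (Set.Ioi 0)) ≤ 1) :
    ∀ c : ℝ, Tendsto
      (fun ε => (∫⁻ ω in B ε, ENNReal.ofReal (Real.exp (∑ i, c * A i ω)) ∂P) / P (B ε))
      (nhdsWithin 0 (Set.Ioi 0)) (nhds 1) := by
  classical
  set F : ℝ → ℝ → ENNReal := fun c ε =>
    (∫⁻ ω in B ε, ENNReal.ofReal (Real.exp (∑ i, c * A i ω)) ∂P) / P (B ε) with hF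
  have hmeas : ∀ c : ℝ, Measurable (fun ω => ENNReal.ofReal (Real.exp (∑ i, c * A i ω))) := by
    intro c
    exact (Real.measurable_exp.comp
      (Finset.measurable_sum _ (fun i _ => (hA i).const_mul c))).ennreal_ofReal
  have hmeas1 : ∀ (c : ℝ) (i : Fin n),
      Measurable (fun ω => ENNReal.ofReal (Real.exp (c * A i ω))) := by
    intro c i
    exact (Real.measurable_exp.comp ((hA i).const_mul c)).ennreal_ofReal
  have hpos : ∀ᶠ ε in nhdsWithin (0:ℝ) (Set.Ioi 0), 0 < ε := self_mem_nhdsWithin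
  have upper : ∀ c : ℝ, ∀ b : ENNReal, 1 < b →
      ∀ᶠ ε in nhdsWithin (0:ℝ) (Set.Ioi 0), F c ε < b := by
    intro c b hb
    obtain ⟨d, hd1, hdb⟩ := exists_between hb
    rcases Nat.eq_zero_or_pos n with hn | hn
    · subst hn
      filter_upwards [hpos] with ε hε
      simp only [hF, Finset.univ_eq_empty, Finset.sum_empty, Real.exp_zero, ENNReal.ofReal_one,
        lintegral_one, Measure.restrict_apply_univ]
      rw [ENNReal.div_self (hBpos ε hε).ne' (measure_ne_top _ _)]
      exact hb
    · have h1 : ∀ i : Fin n, ∀ᶠ ε in nhdsWithin (0:ℝ) (Set.Ioi 0),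
          (∫⁻ ω in B ε, ENNReal.ofReal (Real.exp ((n * c) * A i ω)) ∂P) / P (B ε) < d :=
        fun i => eventually_lt_of_limsup_lt (lt_of_le_of_lt (hup (n * c) i) hd1)
      filter_upwards [hpos, eventually_all.2 h1] with ε hε h
      refine lt_of_le_of_lt ?_ hdb
      have hn0 : (n : ENNReal) ≠ 0 := by exact_mod_cast hn.ne'
      have hnR : (0 : ℝ) < n := by exact_mod_cast hn
      have key : ∀ ω, (n : ENNReal) * ENNReal.ofReal (Real.exp (∑ i, c * A i ω)) ≤
          ∑ i, ENNReal.ofReal (Real.exp ((n * c) * A i ω)) := by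
        intro ω
        have hc := convexOn_exp.map_sum_le (t := Finset.univ) (w := fun _ : Fin n => (n:ℝ)⁻¹)
          (p := fun i => (n * c) * A i ω) (fun _ _ => by positivity)
          (by simp [hnR.ne']) (fun _ _ => Set.mem_univ _)
        simp only [smul_eq_mul] at hc
        have e : ∑ i, (n:ℝ)⁻¹ * (n * c * A i ω) = ∑ i, c * A i ω :=
          Finset.sum_congr rfl (fun i _ => by field_simp)
        rw [e, ← Finset.mul_sum Finset.univ (fun i => Real.exp (n * c * A i ω))] at hc
        rw [← ENNReal.ofReal_sum_of_nonneg (fun i _ => (Real.exp_pos _).le),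
          ← ENNReal.ofReal_natCast, ← ENNReal.ofReal_mul hnR.le]
        apply ENNReal.ofReal_le_ofReal
        rwa [inv_mul_eq_div, le_div_iff₀' hnR] at hc
      have h2 : (n : ENNReal) * F c ε ≤ n * d := by
        calc (n : ENNReal) * F c ε
            = (∫⁻ ω in B ε, n * ENNReal.ofReal (Real.exp (∑ i, c * A i ω)) ∂P) / P (B ε) := by
              rw [lintegral_const_mul _ (hmeas c), mul_div_assoc]
          _ ≤ (∫⁻ ω in B ε, ∑ i, ENNReal.ofReal (Real.exp ((n * c) * A i ω)) ∂P) / P (B ε) :=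
              ENNReal.div_le_div_right (lintegral_mono key) _
          _ = ∑ i, (∫⁻ ω in B ε, ENNReal.ofReal (Real.exp ((n * c) * A i ω)) ∂P) / P (B ε) := by
              rw [lintegral_finsetSum _ (fun i _ => hmeas1 _ i)]
              simp only [div_eq_mul_inv, Finset.sum_mul]
          _ ≤ ∑ _i : Fin n, d := Finset.sum_le_sum (fun i _ => (h i).le)
          _ = n * d := by simp
      exact (ENNReal.mul_le_mul_iff_right hn0 (ENNReal.natCast_ne_top n)).1 h2
  intro c
  change Tendsto (F c) _ _
  refine tendsto_order.2 ⟨fun a ha => ?_, fun b hb => upper c b hb⟩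
  have ha' : a ≠ ⊤ := (ha.trans ENNReal.one_lt_top).ne
  have hb : (1 : ENNReal) < 2 - a := by
    rw [lt_tsub_iff_right, ← one_add_one_eq_two]
    exact (ENNReal.add_lt_add_iff_left ENNReal.one_ne_top).2 ha
  filter_upwards [hpos, upper (-c) _ hb] with ε hε h
  by_contra! hle
  have h2 : 2 ≤ F c ε + F (-c) ε := by
    calc (2 : ENNReal) = (∫⁻ _ in B ε, 2 ∂P) / P (B ε) := by
          rw [lintegral_const, Measure.restrict_apply_univ,
            ENNReal.mul_div_cancel_right (hBpos ε hε).ne' (measure_ne_top _ _)]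
      _ ≤ (∫⁻ ω in B ε, (ENNReal.ofReal (Real.exp (∑ i, c * A i ω)) +
            ENNReal.ofReal (Real.exp (∑ i, (-c) * A i ω))) ∂P) / P (B ε) := by
          refine ENNReal.div_le_div_right (lintegral_mono fun ω => ?_) _
          rw [← ENNReal.ofReal_add (Real.exp_pos _).le (Real.exp_pos _).le]
          have : (2 : ENNReal) = ENNReal.ofReal 2 := by simp
          rw [this]
          apply ENNReal.ofReal_le_ofReal
          have e : ∑ i, (-c) * A i ω = -∑ i, c * A i ω := by simp
          rw [e]
          linarith [Real.add_one_le_exp (∑ i, c * A i ω), Real.add_one_le_exp (-∑ i, c * A i ω)]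
      _ = F c ε + F (-c) ε := by
          rw [lintegral_add_left (hmeas c), ENNReal.add_div]
  have h3 : F c ε + F (-c) ε < a + (2 - a) :=
    ENNReal.add_lt_add_of_le_of_lt (ne_top_of_le_ne_top ha' hle) hle h
  rw [add_tsub_cancel_of_le (ha.le.trans one_le_two)] at h3
  exact absurd h2 (not_le.2 h3)
end
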